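/- arXiv:1311.5256 — 11 statements merged into one kernel-verified Lean document; each statement's English description precedes it below -/
import Mathlib

section
/- Let R be an algebraic curvature operator on ℝ⁴. Then ⟨Rω,ω⟩_h > 0 for every nonzero ω ∈ Λ²₊⊗ℂ ⊆ Λ²ℂ⁴ of the form ω = v∧w with v,w ∈ ℂ⁴ spanning an isotropic 2-plane, if and only if the quadratic form η ↦ ⟨Rη,η⟩ on Λ²₊ is 2-positive, i.e. ⟨Rη,η⟩ + ⟨Rζ,ζ⟩ > 0 for all η,ζ ∈ Λ²₊ with |η| = |ζ| = 1 and ⟨η,ζ⟩ = 0. -/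
noncomputable section

open scoped ComplexConjugate

/-- `ℝ⁴` with its standard basis. -/
abbrev V4 := Fin 4 → ℝ
/-- `Λ²ℝ⁴` in the coordinates given by the basis
`e₁∧e₂, e₁∧e₃, e₁∧e₄, e₂∧e₃, e₂∧e₄, e₃∧e₄` (0-indexed). -/
abbrev L6 := Fin 6 → ℝ
/-- Endomorphisms of `Λ²ℝ⁴`, as `6×6` matrices. -/
abbrev M6 := Fin 6 → Fin 6 → ℝ

/-- standard basis of ℝ⁴ -/
def std4 (i : Fin 4) : V4 := fun j => if j = i then 1 else 0

/-- the standard inner product of ℝ⁴ -/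
def ip4 (x y : V4) : ℝ := ∑ i, x i * y i

/-- the index pairs for the basis of Λ²ℝ⁴ -/
def pr : Fin 6 → Fin 4 × Fin 4 := ![(0,1),(0,2),(0,3),(1,2),(1,3),(2,3)]

/-- the wedge product `x ∧ y` of two vectors, in coordinates.  With this
coordinate expression, the standard inner product `ip6` below satisfies
`⟨x∧y, z∧t⟩ = ⟨x,z⟩⟨y,t⟩ − ⟨x,t⟩⟨y,z⟩`. -/
def wedge (x y : V4) : L6 := fun k => x (pr k).1 * y (pr k).2 - x (pr k).2 * y (pr k).1

/-- the inner product of Λ²ℝ⁴ -/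
def ip6 (a b : L6) : ℝ := ∑ k, a k * b k

/-- The Hodge star operator on Λ²ℝ⁴. -/
def hodge (w : L6) : L6 := ![w 5, -(w 4), w 3, w 2, -(w 1), w 0]

/-- self-dual 2-forms (the +1 eigenspace Λ²₊ of the Hodge star) -/
def SelfDual (w : L6) : Prop := hodge w = w
/-- anti-self-dual 2-forms (the −1 eigenspace Λ²₋ of the Hodge star) -/
def AntiSelfDual (w : L6) : Prop := hodge w = -w

/-- application of an endomorphism (matrix) of Λ²ℝ⁴ to a 2-form -/
def appM (A : M6) (w : L6) : L6 := fun k => ∑ l, A k l * w l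

/-- symmetry of an endomorphism of Λ²ℝ⁴ w.r.t. the inner product -/
def IsSymm6 (A : M6) : Prop := ∀ a b : L6, ip6 (appM A a) b = ip6 a (appM A b)

/-- the first Bianchi identity -/
def Bianchi (A : M6) : Prop := ∀ x y z t : V4,
  ip6 (appM A (wedge x y)) (wedge z t) + ip6 (appM A (wedge z x)) (wedge y t)
    + ip6 (appM A (wedge y z)) (wedge x t) = 0

/-- algebraic curvature operators on ℝ⁴ : symmetric endomorphisms of Λ²ℝ⁴
satisfying the first Bianchi identity.  The set of these is `S²_BΛ²ℝ⁴`. -/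
def IsCurvOp (A : M6) : Prop := IsSymm6 A ∧ Bianchi A

/-- the scalar curvature: twice the trace -/
def scal (A : M6) : ℝ := 2 * ∑ k, A k k

/-- orthogonal projection P₊ of Λ²ℝ⁴ onto Λ²₊ -/
def pplus (w : L6) : L6 := (1/2 : ℝ) • (w + hodge w)

/-- the self-dual Weyl part W₊ of a curvature operator, as a map on Λ²₊:
`W₊η = P₊(Rη) − (scal(R)/12)·η`. -/
def Wplus (A : M6) (η : L6) : L6 := pplus (appM A η) - (scal A / 12) • η

/-- `R` is PIC₊ : the quadratic form `η ↦ ⟨Rη,η⟩` on Λ²₊ is 2-positive. -/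
def PICp (A : M6) : Prop := ∀ η ζ : L6, SelfDual η → SelfDual ζ →
  ip6 η η = 1 → ip6 ζ ζ = 1 → ip6 η ζ = 0 →
  0 < ip6 (appM A η) η + ip6 (appM A ζ) ζ

/-- `R` is NNIC₊ : the quadratic form `η ↦ ⟨Rη,η⟩` on Λ²₊ is 2-nonnegative. -/
def NNICp (A : M6) : Prop := ∀ η ζ : L6, SelfDual η → SelfDual ζ →
  ip6 η η = 1 → ip6 ζ ζ = 1 → ip6 η ζ = 0 →
  0 ≤ ip6 (appM A η) η + ip6 (appM A ζ) ζ

/-- `R` is PIC₋ : the quadratic form `η ↦ ⟨Rη,η⟩` on Λ²₋ is 2-positive. -/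
def PICm (A : M6) : Prop := ∀ η ζ : L6, AntiSelfDual η → AntiSelfDual ζ →
  ip6 η η = 1 → ip6 ζ ζ = 1 → ip6 η ζ = 0 →
  0 < ip6 (appM A η) η + ip6 (appM A ζ) ζ

/-- `R` is NNIC₋ : the quadratic form `η ↦ ⟨Rη,η⟩` on Λ²₋ is 2-nonnegative. -/
def NNICm (A : M6) : Prop := ∀ η ζ : L6, AntiSelfDual η → AntiSelfDual ζ →
  ip6 η η = 1 → ip6 ζ ζ = 1 → ip6 η ζ = 0 →
  0 ≤ ip6 (appM A η) η + ip6 (appM A ζ) ζ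

/- ### complexifications -/

/-- `ℂ⁴` -/
abbrev VC4 := Fin 4 → ℂ
/-- `Λ²ℂ⁴` -/
abbrev LC6 := Fin 6 → ℂ

/-- the wedge product on ℂ⁴ -/
def wedgeC (x y : VC4) : LC6 := fun k => x (pr k).1 * y (pr k).2 - x (pr k).2 * y (pr k).1

/-- the complex-bilinear extension of the inner product of ℝ⁴ -/
def bilC4 (x y : VC4) : ℂ := ∑ i, x i * y i

/-- the complex-bilinear extension of the inner product of Λ²ℝ⁴ -/
def bilC6 (a b : LC6) : ℂ := ∑ k, a k * b k

/-- the Hermitian inner product `⟨·,·⟩_h` on Λ²ℂ⁴ associated to the real inner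
product on Λ²ℝ⁴ -/
def hermC6 (a b : LC6) : ℂ := ∑ k, a k * conj (b k)

/-- the complex-linear extension of an endomorphism of Λ²ℝ⁴ to Λ²ℂ⁴ -/
def appMC (A : M6) (w : LC6) : LC6 := fun k => ∑ l, (A k l : ℂ) * w l

/-- the complex-linear extension of the Hodge star -/
def hodgeC (w : LC6) : LC6 := ![w 5, -(w 4), w 3, w 2, -(w 1), w 0]

/-- membership in `Λ²₊ ⊗ ℂ` -/
def SelfDualC (w : LC6) : Prop := hodgeC w = w



theorem aux_exists (a b c : ℂ) (h : a^2+b^2+c^2 = 0) (hne : ¬ (a = 0 ∧ b = 0 ∧ c = 0)) :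
    ∃ v w : VC4, bilC4 v v = 0 ∧ bilC4 w w = 0 ∧ bilC4 v w = 0 ∧
      wedgeC v w = ![a, b, c, c, -b, a] := by
  by_cases ha : a = 0
  · by_cases hb : b = 0
    · have hc : c ≠ 0 := fun hc => hne ⟨ha, hb, hc⟩
      exfalso
      subst ha hb
      apply hc
      simpa using h
    · refine ⟨![0, a/b, 1, c/b], ![-b, -c, 0, a], ?_, ?_, ?_, ?_⟩
      · simp [bilC4, Fin.sum_univ_four]; field_simp; linear_combination h
      · simp [bilC4, Fin.sum_univ_four]; linear_combination h
      · simp [bilC4, Fin.sum_univ_four]; field_simp; ring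
      · ext k; fin_cases k <;> simp [wedgeC, pr] <;> field_simp <;> linear_combination h
  · refine ⟨![0, 1, b/a, c/a], ![-a, 0, c, -b], ?_, ?_, ?_, ?_⟩
    · simp [bilC4, Fin.sum_univ_four]; field_simp; linear_combination h
    · simp [bilC4, Fin.sum_univ_four]; linear_combination h
    · simp [bilC4, Fin.sum_univ_four]; field_simp; ring
    · ext k; fin_cases k <;> simp [wedgeC, pr] <;> field_simp <;> linear_combination -h

theorem aux_herm (A : M6) (hA : IsSymm6 A) (ω : LC6) :
    hermC6 (appMC A ω) ω =
      ((ip6 (appM A (fun k => (ω k).re)) (fun k => (ω k).re)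
        + ip6 (appM A (fun k => (ω k).im)) (fun k => (ω k).im) : ℝ) : ℂ) := by
  have hs := hA (fun k => (ω k).re) (fun k => (ω k).im)
  apply Complex.ext
  · rw [Complex.ofReal_re]
    simp only [hermC6, appMC, ip6, appM, Complex.re_sum, Complex.mul_re, Complex.im_sum,
      Complex.mul_im, Complex.conj_re, Complex.conj_im, Complex.ofReal_re, Complex.ofReal_im,
      zero_mul, sub_zero, add_zero, ← Finset.sum_add_distrib]
    exact Finset.sum_congr rfl fun k _ => by ring
  · rw [Complex.ofReal_im]
    simp only [ip6, appM] at hs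
    simp only [hermC6, appMC, Complex.re_sum, Complex.mul_re, Complex.im_sum,
      Complex.mul_im, Complex.conj_re, Complex.conj_im, Complex.ofReal_re, Complex.ofReal_im,
      zero_mul, sub_zero, add_zero, Finset.sum_add_distrib, mul_neg, Finset.sum_neg_distrib]
    rw [hs, neg_add_eq_zero]
    exact Finset.sum_congr rfl fun k _ => by ring

theorem aux_gram (v w : VC4) (hv : bilC4 v v = 0) (hvw : bilC4 v w = 0) :
    bilC6 (wedgeC v w) (wedgeC v w) = 0 := by
  have : bilC6 (wedgeC v w) (wedgeC v w) = bilC4 v v * bilC4 w w - bilC4 v w * bilC4 v w := by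
    simp [bilC6, bilC4, wedgeC, pr, Fin.sum_univ_six, Fin.sum_univ_four]; ring
  rw [this, hv, hvw]; ring

theorem aux_smul (A : M6) (t : ℝ) (η : L6) :
    ip6 (appM A (t • η)) (t • η) = t^2 * ip6 (appM A η) η := by
  simp only [ip6, appM, Finset.mul_sum, Finset.sum_mul, Pi.smul_apply, smul_eq_mul]
  exact Finset.sum_congr rfl fun k _ => Finset.sum_congr rfl fun l _ => by ring

theorem aux_ip_smul (t : ℝ) (η ζ : L6) : ip6 (t • η) (t • ζ) = t^2 * ip6 η ζ := by
  simp only [ip6, Finset.mul_sum, Pi.smul_apply, smul_eq_mul]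
  exact Finset.sum_congr rfl fun k _ => by ring

theorem aux_sd_smul (t : ℝ) (η : L6) (h : SelfDual η) : SelfDual (t • η) := by
  unfold SelfDual at *
  conv_rhs => rw [← h]
  ext k; fin_cases k <;> simp [hodge]

open scoped ComplexOrder in
/-- positivity of the complexified curvature operator on nonzero
isotropic self-dual forms `ω = v∧w` is equivalent to 2-positivity of the
quadratic form `η ↦ ⟨Rη,η⟩` on `Λ²₊`. -/
theorem positive_on_isotropic_selfdual_iff_two_positive (A : M6) (hA : IsCurvOp A) :
    (∀ v w : VC4, bilC4 v v = 0 → bilC4 w w = 0 → bilC4 v w = 0 →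
      SelfDualC (wedgeC v w) → wedgeC v w ≠ 0 →
      0 < hermC6 (appMC A (wedgeC v w)) (wedgeC v w)) ↔
    (∀ η ζ : L6, SelfDual η → SelfDual ζ → ip6 η η = 1 → ip6 ζ ζ = 1 →
      ip6 η ζ = 0 → 0 < ip6 (appM A η) η + ip6 (appM A ζ) ζ) := by
  constructor
  · intro H η ζ hη hζ h1 h2 h3
    have e0 := congrFun hη 0
    have e1 := congrFun hη 1
    have e2 := congrFun hη 2
    have f0 := congrFun hζ 0
    have f1 := congrFun hζ 1
    have f2 := congrFun hζ 2
    simp [hodge] at e0 e1 e2 f0 f1 f2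
    have e1' : η 4 = -η 1 := by linarith
    have f1' : ζ 4 = -ζ 1 := by linarith
    simp only [ip6, Fin.sum_univ_six, e0, e1', e2, f0, f1', f2] at h1 h2 h3
    obtain ⟨v, w, hv, hw, hvw, hω⟩ := aux_exists (⟨η 0, ζ 0⟩ : ℂ) ⟨η 1, ζ 1⟩ ⟨η 2, ζ 2⟩
      (by
        apply Complex.ext
        · simp [pow_two]; linarith
        · simp [pow_two]; linarith)
      (by
        rintro ⟨ha, hb, hc⟩
        have ha' := congrArg Complex.re ha
        have hb' := congrArg Complex.re hb
        have hc' := congrArg Complex.re hc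
        simp only [Complex.zero_re] at ha' hb' hc'
        rw [ha', hb', hc'] at h1
        norm_num at h1)
    have hre : (fun k => (wedgeC v w k).re) = η := by
      ext k; rw [hω]; fin_cases k <;> simp [e0, e1', e2]
    have him : (fun k => (wedgeC v w k).im) = ζ := by
      ext k; rw [hω]; fin_cases k <;> simp [f0, f1', f2]
    have := H v w hv hw hvw
      (by rw [hω]; unfold SelfDualC; ext k; fin_cases k <;> simp [hodgeC])
      (by
        intro h0
        have : η = 0 := by rw [← hre, h0]; ext k; simp
        rw [this] at h1
        norm_num at h1)
    rw [aux_herm A hA.1, hre, him] at this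
    exact_mod_cast this
  · intro H v w hv hw hvw hsd hne
    rw [aux_herm A hA.1]
    have hg := aux_gram v w hv hvw
    generalize wedgeC v w = ω at *
    set η : L6 := fun k => (ω k).re with hη
    set ζ : L6 := fun k => (ω k).im with hζ
    have hsη : SelfDual η := by
      ext k
      have := congrArg Complex.re (congrFun hsd k)
      rw [← show (ω k).re = η k from rfl, ← this]
      fin_cases k <;> simp [hodge, hodgeC, hη]
    have hsζ : SelfDual ζ := by
      ext k
      have := congrArg Complex.im (congrFun hsd k)
      rw [← show (ω k).im = ζ k from rfl, ← this]
      fin_cases k <;> simp [hodge, hodgeC, hζ]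
    have g1 : ip6 η η = ip6 ζ ζ := by
      have := congrArg Complex.re hg
      simp only [bilC6, Complex.re_sum, Complex.mul_re, Finset.sum_sub_distrib, Complex.zero_re] at this
      simp only [ip6, hη, hζ]; linarith
    have g2 : ip6 η ζ = 0 := by
      have := congrArg Complex.im hg
      simp only [bilC6, Complex.im_sum, Complex.mul_im, Complex.zero_im] at this
      have h2 : 2 * ip6 η ζ = 0 := by
        rw [← this, ip6, Finset.mul_sum]
        exact Finset.sum_congr rfl fun k _ => by simp only [hη, hζ]; ring
      linarith
    have gpos : 0 < ip6 η η := by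
      have hnn : ∀ x : L6, 0 ≤ ip6 x x := fun x =>
        Finset.sum_nonneg fun k _ => mul_self_nonneg _
      have hz : ∀ x : L6, ip6 x x = 0 → ∀ k, x k = 0 := fun x hx k => by
        have := (Finset.sum_eq_zero_iff_of_nonneg (fun k _ => mul_self_nonneg (x k))).1 hx k
          (Finset.mem_univ k)
        exact mul_self_eq_zero.1 this
      refine lt_of_le_of_ne (hnn η) fun h0 => hne ?_
      ext k
      exact Complex.ext (hz η h0.symm k) (hz ζ (g1 ▸ h0.symm) k)
    set t : ℝ := (Real.sqrt (ip6 η η))⁻¹ with ht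
    have ht2 : t^2 = (ip6 η η)⁻¹ := by rw [ht, inv_pow, Real.sq_sqrt gpos.le]
    have key := H (t • η) (t • ζ) (aux_sd_smul t η hsη) (aux_sd_smul t ζ hsζ)
      (by rw [aux_ip_smul, ht2]; exact inv_mul_cancel₀ gpos.ne')
      (by rw [aux_ip_smul, ht2, ← g1]; exact inv_mul_cancel₀ gpos.ne')
      (by rw [aux_ip_smul, g2, mul_zero])
    rw [aux_smul, aux_smul, ← mul_add] at key
    have := (pos_iff_pos_of_mul_pos key).1 (by positivity)
    exact_mod_cast this
end
end

section
/- Let R be an algebraic curvature operator on ℝ⁴. The quadratic form η ↦ ⟨Rη,η⟩ on Λ²₊ is 2-positive (i.e. ⟨Rη,η⟩ + ⟨Rζ,ζ⟩ > 0 for all η,ζ ∈ Λ²₊ with |η| = |ζ| = 1 and ⟨η,ζ⟩ = 0) if and only if (scal(R)/6)·|η|² − ⟨W₊η,η⟩ > 0 for every nonzero η ∈ Λ²₊. -/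
noncomputable section

open scoped ComplexConjugate

def sdv (a b c : ℝ) : L6 := ![a, b, c, c, -b, a]

lemma sdv_sd (a b c : ℝ) : SelfDual (sdv a b c) := by
  unfold SelfDual
  ext i
  fin_cases i <;> simp [hodge, sdv]

lemma sd_exists (w : L6) (h : SelfDual w) : ∃ a b c, w = sdv a b c := by
  unfold SelfDual at h
  refine ⟨w 0, w 1, w 2, ?_⟩
  have h3 := congrFun h 3
  have h4 := congrFun h 4
  have h5 := congrFun h 5
  simp [hodge] at h3 h4 h5
  ext i
  fin_cases i <;> simp [sdv, h3, h4, h5]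

lemma sdv_ip (a b c x y z : ℝ) :
    ip6 (sdv a b c) (sdv x y z) = 2 * (a * x + b * y + c * z) := by
  simp [ip6, sdv, Fin.sum_univ_succ]
  ring

/-- the quadratic form in three variables -/
def qf (t : Fin 6 → ℝ) (a b c : ℝ) : ℝ :=
  t 0 * a ^ 2 + t 1 * b ^ 2 + t 2 * c ^ 2 + t 3 * (a * b) + t 4 * (a * c) + t 5 * (b * c)

def cf (A : M6) : Fin 6 → ℝ :=
  ![A 0 0 + A 0 5 + A 5 0 + A 5 5, A 1 1 - A 1 4 - A 4 1 + A 4 4,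
    A 2 2 + A 2 3 + A 3 2 + A 3 3,
    A 0 1 - A 0 4 + A 5 1 - A 5 4 + A 1 0 + A 1 5 - A 4 0 - A 4 5,
    A 0 2 + A 0 3 + A 5 2 + A 5 3 + A 2 0 + A 2 5 + A 3 0 + A 3 5,
    A 1 2 + A 1 3 - A 4 2 - A 4 3 + A 2 1 - A 2 4 + A 3 1 - A 3 4]

lemma ip6_six (a b : L6) : ip6 a b =
    a 0 * b 0 + a 1 * b 1 + a 2 * b 2 + a 3 * b 3 + a 4 * b 4 + a 5 * b 5 := by
  simp [ip6, Fin.sum_univ_six]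

lemma appM_six (A : M6) (w : L6) (k : Fin 6) : appM A w k =
    A k 0 * w 0 + A k 1 * w 1 + A k 2 * w 2 + A k 3 * w 3 + A k 4 * w 4 + A k 5 * w 5 := by
  simp [appM, Fin.sum_univ_six]

lemma sdv_q (A : M6) (a b c : ℝ) :
    ip6 (appM A (sdv a b c)) (sdv a b c) = qf (cf A) a b c := by
  simp [ip6_six, appM_six, sdv, qf, cf]
  ring

lemma ip6_pplus (x : L6) (a b c : ℝ) : ip6 (pplus x) (sdv a b c) = ip6 x (sdv a b c) := by
  have hk : ∀ k, pplus x k = 1 / 2 * (x k + hodge x k) := fun k => rfl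
  simp only [ip6_six, hk]
  simp [hodge, sdv]
  ring

lemma ip6_W (A : M6) (a b c : ℝ) : ip6 (Wplus A (sdv a b c)) (sdv a b c)
    = qf (cf A) a b c - scal A / 12 * (2 * (a ^ 2 + b ^ 2 + c ^ 2)) := by
  have h1 := ip6_pplus (appM A (sdv a b c)) a b c
  rw [sdv_q] at h1
  have h2 := sdv_ip a b c a b c
  have h3 : ip6 (Wplus A (sdv a b c)) (sdv a b c) =
    ip6 (pplus (appM A (sdv a b c))) (sdv a b c)
      - scal A / 12 * ip6 (sdv a b c) (sdv a b c) := by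
    simp only [ip6_six, Wplus, Pi.sub_apply, Pi.smul_apply, smul_eq_mul]
    ring
  rw [h3, h1, h2]
  ring

lemma cf_trace (A : M6) (hA : IsCurvOp A) : cf A 0 + cf A 1 + cf A 2 = scal A / 2 := by
  have hs : ∀ i j, A i j = A j i := by
    intro i j
    have h := hA.1 (Pi.single j 1) (Pi.single i 1)
    simpa [ip6, appM, Pi.single_apply] using h
  have hb := hA.2 (std4 0) (std4 1) (std4 2) (std4 3)
  simp [ip6_six, appM_six, wedge, pr, std4] at hb
  simp [cf, scal, Fin.sum_univ_six]
  linarith [hs 0 5, hs 1 4, hs 2 3]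

lemma qf_trace (t : Fin 6 → ℝ) (a b c x y z u v w : ℝ)
    (h1 : 2 * (a * a + b * b + c * c) = 1) (h2 : 2 * (x * x + y * y + z * z) = 1)
    (h3 : 2 * (u * u + v * v + w * w) = 1)
    (h4 : 2 * (a * x + b * y + c * z) = 0) (h5 : 2 * (a * u + b * v + c * w) = 0)
    (h6 : 2 * (x * u + y * v + z * w) = 0) :
    2 * (qf t a b c + qf t x y z + qf t u v w) = t 0 + t 1 + t 2 := by
  let M : Matrix (Fin 3) (Fin 3) ℝ := !![a, b, c; x, y, z; u, v, w]
  let N : Matrix (Fin 3) (Fin 3) ℝ := !![2*a, 2*x, 2*u; 2*b, 2*y, 2*v; 2*c, 2*z, 2*w]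
  have hM : M * N = 1 := by
    ext i j
    fin_cases i <;> fin_cases j <;> simp [M, N, Matrix.mul_apply, Fin.sum_univ_three] <;> linarith
  have hN : N * M = 1 := mul_eq_one_comm.mp hM
  have e (i j : Fin 3) := congrFun (congrFun hN i) j
  have e00 := e 0 0
  have e11 := e 1 1
  have e22 := e 2 2
  have e01 := e 0 1
  have e02 := e 0 2
  have e12 := e 1 2
  simp [M, N, Matrix.mul_apply, Fin.sum_univ_three] at e00 e11 e22 e01 e02 e12
  unfold qf
  linear_combination t 0 * e00 + t 1 * e11 + t 2 * e22 + t 3 * e01 + t 4 * e02 + t 5 * e12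

lemma exists_perp (a b c : ℝ) : ∃ x y z : ℝ,
    2 * (x * x + y * y + z * z) = 1 ∧ 2 * (a * x + b * y + c * z) = 0 := by
  by_cases h : a ^ 2 + b ^ 2 = 0
  · have ha : a = 0 := by nlinarith [sq_nonneg a, sq_nonneg b]
    have hs : √2 * √2 = (2 : ℝ) := Real.mul_self_sqrt (by norm_num)
    exact ⟨√2 / 2, 0, 0, by linear_combination hs / 2, by rw [ha]; ring⟩
  · have hp : 0 < a ^ 2 + b ^ 2 := lt_of_le_of_ne (by positivity) (Ne.symm h)
    have hs : √(2 * (a ^ 2 + b ^ 2)) * √(2 * (a ^ 2 + b ^ 2)) = 2 * (a ^ 2 + b ^ 2) :=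
      Real.mul_self_sqrt (by positivity)
    have hn : √(2 * (a ^ 2 + b ^ 2)) ≠ 0 := by positivity
    generalize √(2 * (a ^ 2 + b ^ 2)) = s at hs hn
    refine ⟨-b / s, a / s, 0, ?_, ?_⟩
    · field_simp
      linarith
    · field_simp
      ring

lemma exists_cross (a b c x y z : ℝ)
    (h1 : 2 * (a * a + b * b + c * c) = 1) (h2 : 2 * (x * x + y * y + z * z) = 1)
    (h4 : 2 * (a * x + b * y + c * z) = 0) : ∃ u v w : ℝ,
    2 * (u * u + v * v + w * w) = 1 ∧ 2 * (a * u + b * v + c * w) = 0 ∧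
    2 * (x * u + y * v + z * w) = 0 := by
  have hs : √2 * √2 = (2 : ℝ) := Real.mul_self_sqrt (by norm_num)
  refine ⟨√2 * (b * z - c * y), √2 * (c * x - a * z), √2 * (a * y - b * x), ?_, by ring, by ring⟩
  have : (b * z - c * y) ^ 2 + (c * x - a * z) ^ 2 + (a * y - b * x) ^ 2 = 1 / 4 := by
    linear_combination (x * x + y * y + z * z) / 2 * h1 + h2 / 4
      - (a * x + b * y + c * z) / 2 * h4
  linear_combination 2 * ((b * z - c * y) ^ 2 + (c * x - a * z) ^ 2 + (a * y - b * x) ^ 2) * hs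
    + 4 * this

/-- 2-positivity of `η ↦ ⟨Rη,η⟩` on `Λ²₊` is equivalent to
`(scal(R)/6)|η|² − ⟨W₊η,η⟩ > 0` for all nonzero `η ∈ Λ²₊`. -/
theorem two_positive_iff_scal_six_sub_weylPlus_pos (A : M6) (hA : IsCurvOp A) :
    (∀ η ζ : L6, SelfDual η → SelfDual ζ → ip6 η η = 1 → ip6 ζ ζ = 1 →
      ip6 η ζ = 0 → 0 < ip6 (appM A η) η + ip6 (appM A ζ) ζ) ↔
    (∀ η : L6, SelfDual η → η ≠ 0 →
      0 < scal A / 6 * ip6 η η - ip6 (Wplus A η) η) := by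
  have ht := cf_trace A hA
  constructor
  · intro H η hη h0
    obtain ⟨a, b, c, rfl⟩ := sd_exists η hη
    rw [ip6_W, sdv_ip]
    have hp : 0 < a ^ 2 + b ^ 2 + c ^ 2 := by
      by_contra hc
      apply h0
      have ha : a = 0 := by nlinarith [sq_nonneg a, sq_nonneg b, sq_nonneg c]
      have hb : b = 0 := by nlinarith [sq_nonneg a, sq_nonneg b, sq_nonneg c]
      have hcc : c = 0 := by nlinarith [sq_nonneg a, sq_nonneg b, sq_nonneg c]
      subst ha hb hcc
      ext i
      fin_cases i <;> simp [sdv]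
    have hs : √(2 * (a ^ 2 + b ^ 2 + c ^ 2)) * √(2 * (a ^ 2 + b ^ 2 + c ^ 2))
      = 2 * (a ^ 2 + b ^ 2 + c ^ 2) := Real.mul_self_sqrt (by positivity)
    have hn : 0 < √(2 * (a ^ 2 + b ^ 2 + c ^ 2)) := by positivity
    generalize √(2 * (a ^ 2 + b ^ 2 + c ^ 2)) = s at hs hn
    obtain ⟨p, q, r, hpd, hqd, hrd⟩ : ∃ p q r, a = s * p ∧ b = s * q ∧ c = s * r :=
      ⟨a / s, b / s, c / s, by field_simp, by field_simp, by field_simp⟩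
    subst hpd hqd hrd
    have h1 : 2 * (p * p + q * q + r * r) = 1 := by
      have : s ^ 2 ≠ 0 := by positivity
      apply mul_left_cancel₀ this
      linear_combination -hs
    obtain ⟨x, y, z, h2, h4⟩ := exists_perp p q r
    obtain ⟨u, v, w, h3, h5, h6⟩ := exists_cross p q r x y z h1 h2 h4
    have hT := qf_trace (cf A) p q r x y z u v w h1 h2 h3 h4 h5 h6
    have hH := H _ _ (sdv_sd x y z) (sdv_sd u v w) (by rw [sdv_ip, h2]) (by rw [sdv_ip, h3])
      (by rw [sdv_ip, h6])
    rw [sdv_q, sdv_q] at hH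
    have hpos := mul_pos (pow_pos hn 2) hH
    have hq : qf (cf A) (s * p) (s * q) (s * r) = s ^ 2 * qf (cf A) p q r := by
      unfold qf
      ring
    rw [hq]
    refine lt_of_lt_of_eq hpos ?_
    linear_combination s ^ 2 / 2 * hT + s ^ 2 / 2 * ht - scal A * s ^ 2 / 4 * h1
  · intro H η ζ hη hζ n1 n2 n3
    obtain ⟨a, b, c, rfl⟩ := sd_exists η hη
    obtain ⟨x, y, z, rfl⟩ := sd_exists ζ hζ
    rw [sdv_ip] at n1 n2 n3
    obtain ⟨u, v, w, h3, h5, h6⟩ := exists_cross a b c x y z n1 n2 n3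
    have hT := qf_trace (cf A) a b c x y z u v w n1 n2 h3 n3 h5 h6
    have hH := H (sdv u v w) (sdv_sd u v w) (by
      intro h
      have := sdv_ip u v w u v w
      rw [h3, h] at this
      simp [ip6] at this)
    rw [ip6_W, sdv_ip] at hH
    rw [sdv_q, sdv_q]
    refine lt_of_lt_of_eq hH ?_
    linear_combination (scal A / 4) * h3 - hT / 2 - ht / 2
end
end

section
/- Let R be an algebraic curvature operator on ℝ⁴. Then R is PIC₊ if and only if for every positively oriented orthonormal basis (f₁,f₂,f₃,f₄) of ℝ⁴ one has R₁₃₁₃ + R₁₄₁₄ + R₂₃₂₃ + R₂₄₂₄ − 2R₁₂₃₄ > 0, where R_{ijkl} = ⟨R(fᵢ∧fⱼ), fₖ∧fₗ⟩. -/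
noncomputable section

open scoped ComplexConjugate

/-- the bilinear form of an endomorphism -/
def bf (A : M6) (a b : L6) : ℝ := ip6 (appM A a) b

lemma bf_add_left (A : M6) (a b c : L6) : bf A (a + b) c = bf A a c + bf A b c := by
  simp only [bf, ip6, appM, Pi.add_apply, mul_add, Finset.sum_add_distrib, add_mul]

lemma bf_add_right (A : M6) (a b c : L6) : bf A a (b + c) = bf A a b + bf A a c := by
  simp only [bf, ip6, Pi.add_apply, mul_add, Finset.sum_add_distrib]

lemma bf_smul_left (A : M6) (r : ℝ) (a c : L6) : bf A (r • a) c = r * bf A a c := by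
  simp only [bf, ip6, appM, Pi.smul_apply, smul_eq_mul, Finset.mul_sum, Finset.sum_mul]
  refine Finset.sum_congr rfl fun i _ => Finset.sum_congr rfl fun j _ => by ring

lemma bf_smul_right (A : M6) (r : ℝ) (a c : L6) : bf A a (r • c) = r * bf A a c := by
  simp only [bf, ip6, Pi.smul_apply, smul_eq_mul, Finset.mul_sum]
  refine Finset.sum_congr rfl fun i _ => by ring

lemma bf_symm (A : M6) (h : IsSymm6 A) (a b : L6) : bf A a b = bf A b a := by
  unfold bf
  rw [h a b]
  simp only [ip6, mul_comm]

lemma wedge_swap (x y : V4) : wedge x y = (-1 : ℝ) • wedge y x := by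
  funext k
  simp only [wedge, Pi.smul_apply, smul_eq_mul]
  ring

/-- the form `f₁∧f₃ − f₂∧f₄` -/
def PP (f : Fin 4 → V4) : L6 := wedge (f 0) (f 2) + (-1 : ℝ) • wedge (f 1) (f 3)
/-- the form `f₁∧f₄ + f₂∧f₃` -/
def QQ (f : Fin 4 → V4) : L6 := wedge (f 0) (f 3) + wedge (f 1) (f 2)

lemma key (A : M6) (hA : IsCurvOp A) (f : Fin 4 → V4) :
    ip6 (appM A (wedge (f 0) (f 2))) (wedge (f 0) (f 2))
        + ip6 (appM A (wedge (f 0) (f 3))) (wedge (f 0) (f 3))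
        + ip6 (appM A (wedge (f 1) (f 2))) (wedge (f 1) (f 2))
        + ip6 (appM A (wedge (f 1) (f 3))) (wedge (f 1) (f 3))
        - 2 * ip6 (appM A (wedge (f 0) (f 1))) (wedge (f 2) (f 3))
      = bf A (PP f) (PP f) + bf A (QQ f) (QQ f) := by
  have hb := hA.2 (f 0) (f 1) (f 2) (f 3)
  change bf A _ _ + bf A _ _ + bf A _ _ = 0 at hb
  change bf A _ _ + bf A _ _ + bf A _ _ + bf A _ _ - 2 * bf A _ _ = _
  rw [wedge_swap (f 2) (f 0), bf_smul_left] at hb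
  simp only [PP, QQ, bf_add_left, bf_add_right, bf_smul_left, bf_smul_right]
  have h1 := bf_symm A hA.1 (wedge (f 0) (f 2)) (wedge (f 1) (f 3))
  have h2 := bf_symm A hA.1 (wedge (f 0) (f 3)) (wedge (f 1) (f 2))
  linarith

lemma ip6_wedge (x y z t : V4) :
    ip6 (wedge x y) (wedge z t) = ip4 x z * ip4 y t - ip4 x t * ip4 y z := by
  simp [ip6, ip4, wedge, pr, Fin.sum_univ_succ, Fin.succ]
  ring

lemma ip6_hodge (a b : L6) : ip6 (hodge a) (hodge b) = ip6 a b := by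
  simp [ip6, hodge, Fin.sum_univ_six]
  ring

lemma ip6_hodge_wedge (f : Fin 4 → V4) :
    ip6 (hodge (wedge (f 0) (f 2))) (wedge (f 1) (f 3))
      = - (Matrix.of fun i j => f i j).det := by
  simp [Matrix.det_succ_row_zero, ip6, hodge, wedge, pr, Fin.sum_univ_succ, Fin.succAbove, Fin.succ]
  ring

lemma ip6_hodge_wedge2 (f : Fin 4 → V4) :
    ip6 (hodge (wedge (f 0) (f 3))) (wedge (f 1) (f 2))
      = (Matrix.of fun i j => f i j).det := by
  simp [Matrix.det_succ_row_zero, ip6, hodge, wedge, pr, Fin.sum_univ_succ, Fin.succAbove, Fin.succ]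
  ring

lemma eq_of_ip6 (a b : L6) (ha : ip6 a a = 1) (hb : ip6 b b = 1) (hab : ip6 a b = 1) :
    a = b := by
  have h : ∑ k, (a k - b k) ^ 2 = 0 := by
    have : ∑ k, (a k - b k) ^ 2 = ip6 a a - 2 * ip6 a b + ip6 b b := by
      simp only [ip6, Finset.mul_sum, ← Finset.sum_sub_distrib, ← Finset.sum_add_distrib]
      exact Finset.sum_congr rfl fun k _ => by ring
    rw [this, ha, hb, hab]; norm_num
  rw [Finset.sum_eq_zero_iff_of_nonneg (fun _ _ => sq_nonneg _)] at h
  funext k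
  have := h k (Finset.mem_univ k)
  exact sub_eq_zero.mp (pow_eq_zero_iff (two_ne_zero) |>.mp this)

lemma hodge_hodge (a : L6) : hodge (hodge a) = a := by
  funext k
  fin_cases k <;> simp [hodge]

lemma hodge_add (a b : L6) : hodge (a + b) = hodge a + hodge b := by
  funext k
  fin_cases k <;> simp [hodge] <;> ring

lemma hodge_smul (r : ℝ) (a : L6) : hodge (r • a) = r • hodge a := by
  funext k
  fin_cases k <;> simp [hodge]

lemma ip6_smul (r s : ℝ) (a b : L6) : ip6 (r • a) (s • b) = r * s * ip6 a b := by
  simp only [ip6, Pi.smul_apply, smul_eq_mul, Finset.mul_sum]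
  exact Finset.sum_congr rfl fun k _ => by ring

lemma ip6_add_left (a b c : L6) : ip6 (a + b) c = ip6 a c + ip6 b c := by
  simp only [ip6, Pi.add_apply, add_mul, Finset.sum_add_distrib]

lemma ip6_add_right (a b c : L6) : ip6 a (b + c) = ip6 a b + ip6 a c := by
  simp only [ip6, Pi.add_apply, mul_add, Finset.sum_add_distrib]

lemma ip6_smul_left (r : ℝ) (a b : L6) : ip6 (r • a) b = r * ip6 a b := by
  simpa using ip6_smul r 1 a b

lemma ip6_smul_right (r : ℝ) (a b : L6) : ip6 a (r • b) = r * ip6 a b := by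
  simpa using ip6_smul 1 r a b

lemma sd_PP (f : Fin 4 → V4) (h : ∀ i j, ip4 (f i) (f j) = if i = j then 1 else 0)
    (hd : (Matrix.of fun i j => f i j).det = 1) : SelfDual (PP f) := by
  have e : hodge (wedge (f 0) (f 2)) = (-1 : ℝ) • wedge (f 1) (f 3) := by
    apply eq_of_ip6
    · rw [ip6_hodge, ip6_wedge]; simp [h]
    · rw [ip6_smul, ip6_wedge]; simp [h]
    · rw [ip6_smul_right, ip6_hodge_wedge, hd]; norm_num
  have e2 := congrArg hodge e
  rw [hodge_hodge, hodge_smul] at e2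
  unfold SelfDual PP
  rw [hodge_add, hodge_smul, ← e2, e, add_comm]

lemma sd_QQ (f : Fin 4 → V4) (h : ∀ i j, ip4 (f i) (f j) = if i = j then 1 else 0)
    (hd : (Matrix.of fun i j => f i j).det = 1) : SelfDual (QQ f) := by
  have e : hodge (wedge (f 0) (f 3)) = wedge (f 1) (f 2) := by
    apply eq_of_ip6
    · rw [ip6_hodge, ip6_wedge]; simp [h]
    · rw [ip6_wedge]; simp [h]
    · rw [ip6_hodge_wedge2, hd]
  have e2 := congrArg hodge e
  rw [hodge_hodge] at e2
  unfold SelfDual QQ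
  rw [hodge_add, ← e2, e, add_comm]

lemma sd_ext (a b : L6) (ha : SelfDual a) (hb : SelfDual b) (h0 : a 0 = b 0) (h1 : a 1 = b 1)
    (h2 : a 2 = b 2) : a = b := by
  unfold SelfDual at ha hb
  have a3 := congrFun ha 3
  have a4 := congrFun ha 4
  have a5 := congrFun ha 5
  have b3 := congrFun hb 3
  have b4 := congrFun hb 4
  have b5 := congrFun hb 5
  simp [hodge] at a3 a4 a5 b3 b4 b5
  funext k
  fin_cases k <;> simp <;> linarith

lemma sd_smul (r : ℝ) (a : L6) (ha : SelfDual a) : SelfDual (r • a) := by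
  unfold SelfDual at *
  rw [hodge_smul, ha]

lemma sd_ip (a b : L6) (ha : SelfDual a) (hb : SelfDual b) :
    ip6 a b = 2 * (a 0 * b 0 + a 1 * b 1 + a 2 * b 2) := by
  unfold SelfDual at ha hb
  have a3 := congrFun ha 3
  have a4 := congrFun ha 4
  have a5 := congrFun ha 5
  have b3 := congrFun hb 3
  have b4 := congrFun hb 4
  have b5 := congrFun hb 5
  simp [hodge] at a3 a4 a5 b3 b4 b5
  simp only [ip6, Fin.sum_univ_six, ← a3, ← a4, ← a5, ← b3, ← b4, ← b5]
  ring

/-- the frame built from two vectors of `ℝ³` -/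
def frame (u v : L6) : Fin 4 → V4 :=
  ![![1, 0, 0, 0],
    ![0, u 1 * v 2 - u 2 * v 1, u 2 * v 0 - u 0 * v 2, u 0 * v 1 - u 1 * v 0],
    ![0, u 0, u 1, u 2], ![0, v 0, v 1, v 2]]

lemma frame_on (u v : L6) (hu : u 0 * u 0 + u 1 * u 1 + u 2 * u 2 = 1)
    (hv : v 0 * v 0 + v 1 * v 1 + v 2 * v 2 = 1)
    (huv : u 0 * v 0 + u 1 * v 1 + u 2 * v 2 = 0) :
    ∀ i j, ip4 (frame u v i) (frame u v j) = if i = j then 1 else 0 := by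
  have hl : (u 1 * v 2 - u 2 * v 1) ^ 2 + (u 2 * v 0 - u 0 * v 2) ^ 2
      + (u 0 * v 1 - u 1 * v 0) ^ 2 = 1 := by
    linear_combination (v 0 * v 0 + v 1 * v 1 + v 2 * v 2) * hu + hv
      - (u 0 * v 0 + u 1 * v 1 + u 2 * v 2) * huv
  intro i j
  fin_cases i <;> fin_cases j <;> simp [ip4, frame, Fin.sum_univ_four] <;>
    first | linarith | (ring_nf; done)

lemma frame_det (u v : L6) (hu : u 0 * u 0 + u 1 * u 1 + u 2 * u 2 = 1)
    (hv : v 0 * v 0 + v 1 * v 1 + v 2 * v 2 = 1)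
    (huv : u 0 * v 0 + u 1 * v 1 + u 2 * v 2 = 0) :
    (Matrix.of fun i j => frame u v i j).det = 1 := by
  have hl : (u 1 * v 2 - u 2 * v 1) ^ 2 + (u 2 * v 0 - u 0 * v 2) ^ 2
      + (u 0 * v 1 - u 1 * v 0) ^ 2 = 1 := by
    linear_combination (v 0 * v 0 + v 1 * v 1 + v 2 * v 2) * hu + hv
      - (u 0 * v 0 + u 1 * v 1 + u 2 * v 2) * huv
  rw [← hl, ← neg_neg (Matrix.det _), ← ip6_hodge_wedge]
  simp [frame, ip6, hodge, wedge, pr, Fin.sum_univ_six]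
  ring

/-- `R` is PIC₊ iff for every positively oriented orthonormal
basis `(f₁,f₂,f₃,f₄)` one has
`R₁₃₁₃ + R₁₄₁₄ + R₂₃₂₃ + R₂₄₂₄ − 2R₁₂₃₄ > 0`. -/
theorem picPlus_iff_oriented_basis_inequality (A : M6) (hA : IsCurvOp A) :
    PICp A ↔
    ∀ f : Fin 4 → V4, (∀ i j, ip4 (f i) (f j) = if i = j then 1 else 0) →
      (Matrix.of fun i j => f i j).det = 1 →
      0 < ip6 (appM A (wedge (f 0) (f 2))) (wedge (f 0) (f 2))
        + ip6 (appM A (wedge (f 0) (f 3))) (wedge (f 0) (f 3))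
        + ip6 (appM A (wedge (f 1) (f 2))) (wedge (f 1) (f 2))
        + ip6 (appM A (wedge (f 1) (f 3))) (wedge (f 1) (f 3))
        - 2 * ip6 (appM A (wedge (f 0) (f 1))) (wedge (f 2) (f 3)) := by
  have s2 : Real.sqrt 2 * Real.sqrt 2 = 2 := Real.mul_self_sqrt (by norm_num)
  constructor
  · intro hP f h hd
    rw [key A hA]
    have hr : (Real.sqrt 2)⁻¹ * (Real.sqrt 2)⁻¹ = 1 / 2 := by
      rw [← mul_inv, s2]; norm_num
    have := hP ((Real.sqrt 2)⁻¹ • PP f) ((Real.sqrt 2)⁻¹ • QQ f)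
      (sd_smul _ _ (sd_PP f h hd)) (sd_smul _ _ (sd_QQ f h hd))
      (by rw [ip6_smul, hr, PP]
          simp only [ip6_add_left, ip6_add_right, ip6_smul_left, ip6_smul_right, ip6_wedge, h]
          simp [Fin.ext_iff] <;> norm_num)
      (by rw [ip6_smul, hr, QQ]
          simp only [ip6_add_left, ip6_add_right, ip6_smul_left, ip6_smul_right, ip6_wedge, h]
          simp [Fin.ext_iff] <;> norm_num)
      (by rw [ip6_smul, hr, PP, QQ]
          simp only [ip6_add_left, ip6_add_right, ip6_smul_left, ip6_smul_right, ip6_wedge, h]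
          simp [Fin.ext_iff] <;> norm_num)
    change 0 < bf A _ _ + bf A _ _ at this
    rw [bf_smul_left, bf_smul_right, bf_smul_left, bf_smul_right, ← mul_assoc, ← mul_assoc,
      hr] at this
    linarith
  · intro hF η ζ hη hζ h1 h2 h12
    rw [sd_ip _ _ hη hη] at h1
    rw [sd_ip _ _ hζ hζ] at h2
    rw [sd_ip _ _ hη hζ] at h12
    obtain ⟨u, hu⟩ : ∃ u, u = Real.sqrt 2 • η := ⟨_, rfl⟩
    obtain ⟨v, hv⟩ : ∃ v, v = Real.sqrt 2 • ζ := ⟨_, rfl⟩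
    have su : SelfDual u := hu ▸ sd_smul _ _ hη
    have sv : SelfDual v := hv ▸ sd_smul _ _ hζ
    have huu : u 0 * u 0 + u 1 * u 1 + u 2 * u 2 = 1 := by
      simp only [hu, Pi.smul_apply, smul_eq_mul]
      linear_combination h1 + (η 0 * η 0 + η 1 * η 1 + η 2 * η 2) * s2
    have hvv : v 0 * v 0 + v 1 * v 1 + v 2 * v 2 = 1 := by
      simp only [hv, Pi.smul_apply, smul_eq_mul]
      linear_combination h2 + (ζ 0 * ζ 0 + ζ 1 * ζ 1 + ζ 2 * ζ 2) * s2
    have huv : u 0 * v 0 + u 1 * v 1 + u 2 * v 2 = 0 := by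
      simp only [hu, hv, Pi.smul_apply, smul_eq_mul]
      linear_combination h12 + (η 0 * ζ 0 + η 1 * ζ 1 + η 2 * ζ 2) * s2
    have ho := frame_on u v huu hvv huv
    have hd := frame_det u v huu hvv huv
    have := hF (frame u v) ho hd
    rw [key A hA] at this
    have hp : PP (frame u v) = u := by
      apply sd_ext _ _ (sd_PP _ ho hd) su <;> simp [PP, frame, wedge, pr]
    have hq : QQ (frame u v) = v := by
      apply sd_ext _ _ (sd_QQ _ ho hd) sv <;> simp [QQ, frame, wedge, pr]
    rw [hp, hq, hu, hv, bf_smul_left, bf_smul_right, bf_smul_left, bf_smul_right, ← mul_assoc,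
      ← mul_assoc, s2] at this
    change 0 < bf A _ _ + bf A _ _
    linarith
end
end

section
/- If an algebraic curvature operator R on ℝ⁴ is PIC₊, then its scalar curvature is positive: scal(R) > 0. -/
noncomputable section

open scoped ComplexConjugate

/-- a PIC₊ algebraic curvature operator has positive scalar
curvature. -/
theorem scal_pos_of_picPlus (A : M6) (hA : IsCurvOp A) (hpic : PICp A) :
    0 < scal A := by
  obtain ⟨hs, hb⟩ := hA
  obtain ⟨s, hs2⟩ : ∃ s : ℝ, s * s = 1 / 2 :=
    ⟨Real.sqrt (1 / 2), Real.mul_self_sqrt (by norm_num)⟩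
  have hb' := hb (std4 0) (std4 1) (std4 2) (std4 3)
  have n1 : ip6 ![s,0,0,0,0,s] ![s,0,0,0,0,s] = 1 := by
    simp [ip6, Fin.sum_univ_succ]; linarith
  have n2 : ip6 ![0,s,0,0,-s,0] ![0,s,0,0,-s,0] = 1 := by
    simp [ip6, Fin.sum_univ_succ]; linarith
  have n3 : ip6 ![0,0,s,s,0,0] ![0,0,s,s,0,0] = 1 := by
    simp [ip6, Fin.sum_univ_succ]; linarith
  have d1 : SelfDual ![s,0,0,0,0,s] := by
    funext i; fin_cases i <;> simp [hodge]
  have d2 : SelfDual ![0,s,0,0,-s,0] := by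
    funext i; fin_cases i <;> simp [hodge]
  have d3 : SelfDual ![0,0,s,s,0,0] := by
    funext i; fin_cases i <;> simp [hodge]
  have p12 := hpic _ _ d1 d2 n1 n2 (by simp [ip6, Fin.sum_univ_succ])
  have p13 := hpic _ _ d1 d3 n1 n3 (by simp [ip6, Fin.sum_univ_succ])
  have p23 := hpic _ _ d2 d3 n2 n3 (by simp [ip6, Fin.sum_univ_succ])
  have q1 : ip6 (appM A ![s,0,0,0,0,s]) ![s,0,0,0,0,s]
      = (s * s) * (A 0 0 + A 0 5 + A 5 0 + A 5 5) := by
    simp [ip6, appM, Fin.sum_univ_six]; ring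
  have q2 : ip6 (appM A ![0,s,0,0,-s,0]) ![0,s,0,0,-s,0]
      = (s * s) * (A 1 1 - A 1 4 - A 4 1 + A 4 4) := by
    simp [ip6, appM, Fin.sum_univ_six]; ring
  have q3 : ip6 (appM A ![0,0,s,s,0,0]) ![0,0,s,s,0,0]
      = (s * s) * (A 2 2 + A 2 3 + A 3 2 + A 3 3) := by
    simp [ip6, appM, Fin.sum_univ_six]; ring
  rw [q1, q2, hs2] at p12
  rw [q1, q3, hs2] at p13
  rw [q2, q3, hs2] at p23
  have sy : ∀ i j, A i j = A j i := by
    intro i j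
    have h := hs (Pi.single j 1) (Pi.single i 1)
    simpa [ip6, appM, Pi.single_apply] using h
  have b : A 5 0 - A 4 1 + A 3 2 = 0 := by
    have h50 := sy 5 0
    have h41 := sy 4 1
    have h32 := sy 3 2
    simp [ip6, appM, wedge, pr, std4, Fin.sum_univ_six] at hb'
    linarith
  have h50 := sy 5 0
  have h41 := sy 4 1
  have h32 := sy 3 2
  simp only [scal, Fin.sum_univ_six]
  linarith
end
end

section
/- If an algebraic curvature operator R on ℝ⁴ is NNIC₊ and scal(R) = 0, then its self-dual Weyl part vanishes: W₊ = 0 (equivalently P₊(Rη) = 0 for every η ∈ Λ²₊). -/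
noncomputable section

open scoped ComplexConjugate

theorem aux_symm (A : M6) (h : IsSymm6 A) (i j : Fin 6) : A i j = A j i := by
  have := h (Pi.single j 1) (Pi.single i 1)
  simpa [ip6, appM, Pi.single_apply] using this

theorem aux_sd (a b c : ℝ) : SelfDual ![a, b, c, c, -b, a] := by
  unfold SelfDual hodge
  ext k
  fin_cases k <;> simp

theorem aux_nn (A : M6) (hnn : NNICp A) (a b c x y z : ℝ)
    (h1 : a * a + b * b + c * c = 1 / 2) (h2 : x * x + y * y + z * z = 1 / 2)
    (h3 : a * x + b * y + c * z = 0) :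
    0 ≤ ip6 (appM A ![a, b, c, c, -b, a]) ![a, b, c, c, -b, a]
      + ip6 (appM A ![x, y, z, z, -y, x]) ![x, y, z, z, -y, x] := by
  apply hnn _ _ (aux_sd a b c) (aux_sd x y z)
  · simp [ip6, Fin.sum_univ_six]; linarith
  · simp [ip6, Fin.sum_univ_six]; linarith
  · simp [ip6, Fin.sum_univ_six]; linarith

theorem aux_q (A : M6) (hs : ∀ i j, A i j = A j i) (a b c : ℝ) :
    ip6 (appM A ![a, b, c, c, -b, a]) ![a, b, c, c, -b, a] =
      a * a * (A 0 0 + 2 * A 0 5 + A 5 5) + b * b * (A 1 1 - 2 * A 1 4 + A 4 4)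
      + c * c * (A 2 2 + 2 * A 2 3 + A 3 3)
      + 2 * (a * b) * (A 0 1 - A 0 4 + A 1 5 - A 4 5)
      + 2 * (a * c) * (A 0 2 + A 0 3 + A 2 5 + A 3 5)
      + 2 * (b * c) * (A 1 2 + A 1 3 - A 2 4 - A 3 4) := by
  simp [ip6, appM, Fin.sum_univ_six]
  rw [hs 1 0, hs 2 0, hs 3 0, hs 4 0, hs 5 0, hs 2 1, hs 3 1, hs 4 1, hs 5 1, hs 3 2, hs 4 2,
    hs 5 2, hs 4 3, hs 5 3, hs 5 4]
  ring

theorem aux_h (w : L6) (h0 : w 0 + w 5 = 0) (h1 : w 1 - w 4 = 0) (h2 : w 2 + w 3 = 0) :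
    w + hodge w = 0 := by
  ext k
  fin_cases k
  · show w 0 + w 5 = 0
    linarith
  · show w 1 + -(w 4) = 0
    linarith
  · show w 2 + w 3 = 0
    linarith
  · show w 3 + w 2 = 0
    linarith
  · show w 4 + -(w 1) = 0
    linarith
  · show w 5 + w 0 = 0
    linarith

/-- an NNIC₊ algebraic curvature operator with vanishing scalar
curvature has vanishing self-dual Weyl part. -/
theorem weylPlus_eq_zero_of_nnicPlus_of_scal_eq_zero (A : M6) (hA : IsCurvOp A)
    (hnn : NNICp A) (hscal : scal A = 0) :
    ∀ η : L6, SelfDual η → Wplus A η = 0 := by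
  have hs := aux_symm A hA.1
  have hb := hA.2 (std4 0) (std4 1) (std4 2) (std4 3)
  simp [ip6, appM, wedge, std4, pr, Fin.sum_univ_six] at hb
  have ht : A 0 0 + A 1 1 + A 2 2 + A 3 3 + A 4 4 + A 5 5 = 0 := by
    simp only [scal, Fin.sum_univ_six] at hscal
    linarith
  obtain ⟨s, hss⟩ : ∃ s : ℝ, s * s = 1 / 2 :=
    ⟨√(1 / 2), Real.mul_self_sqrt (by norm_num)⟩
  have key := aux_nn A hnn
  simp only [aux_q A hs] at key
  have k1 := key s 0 0 0 s 0 (by linarith) (by linarith) (by ring)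
  have k2 := key s 0 0 0 0 s (by linarith) (by linarith) (by ring)
  have k3 := key 0 s 0 0 0 s (by linarith) (by linarith) (by ring)
  have k4 := key s 0 0 0 (1/2) (1/2) (by linarith) (by norm_num) (by ring)
  have k5 := key s 0 0 0 (1/2) (-1/2) (by linarith) (by norm_num) (by ring)
  have k6 := key 0 s 0 (1/2) 0 (1/2) (by linarith) (by norm_num) (by ring)
  have k7 := key 0 s 0 (1/2) 0 (-1/2) (by linarith) (by norm_num) (by ring)
  have k8 := key 0 0 s (1/2) (1/2) 0 (by linarith) (by norm_num) (by ring)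
  have k9 := key 0 0 s (1/2) (-1/2) 0 (by linarith) (by norm_num) (by ring)
  rw [hss] at k1 k2 k3 k4 k5 k6 k7 k8 k9
  norm_num at k1 k2 k3 k4 k5 k6 k7 k8 k9
  have s50 := hs 5 0
  have s41 := hs 4 1
  have s32 := hs 3 2
  have d1 : A 0 0 + 2 * A 0 5 + A 5 5 = 0 := by linarith
  have d2 : A 1 1 - 2 * A 1 4 + A 4 4 = 0 := by linarith
  have d3 : A 2 2 + 2 * A 2 3 + A 3 3 = 0 := by linarith
  have o12 : A 0 1 - A 0 4 + A 1 5 - A 4 5 = 0 := by linarith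
  have o13 : A 0 2 + A 0 3 + A 2 5 + A 3 5 = 0 := by linarith
  have o23 : A 1 2 + A 1 3 - A 2 4 - A 3 4 = 0 := by linarith
  intro η hη
  have e5 : η 5 = η 0 := by simpa [hodge] using congrFun hη 0
  have e4 : η 4 = - η 1 := by
    have : - η 4 = η 1 := by simpa [hodge] using congrFun hη 1
    linarith
  have e3 : η 3 = η 2 := by simpa [hodge] using congrFun hη 2
  have r0 : appM A η 0 + appM A η 5 = 0 := by
    simp only [appM, Fin.sum_univ_six, e3, e4, e5]
    rw [hs 5 0, hs 5 1, hs 5 2, hs 5 3, hs 5 4]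
    linear_combination η 0 * d1 + η 1 * o12 + η 2 * o13
  have r1 : appM A η 1 - appM A η 4 = 0 := by
    simp only [appM, Fin.sum_univ_six, e3, e4, e5]
    rw [hs 4 0, hs 4 1, hs 4 2, hs 4 3, hs 1 0]
    linear_combination η 0 * o12 + η 1 * d2 + η 2 * o23
  have r2 : appM A η 2 + appM A η 3 = 0 := by
    simp only [appM, Fin.sum_univ_six, e3, e4, e5]
    rw [hs 3 0, hs 3 1, hs 3 2, hs 2 0, hs 2 1]
    linear_combination η 0 * o13 + η 1 * o23 + η 2 * d3
  unfold Wplus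
  rw [hscal]
  simp [pplus, aux_h _ r0 r1 r2]
end
end

section
/- Let R be a symmetric linear endomorphism of Λ²ℝ⁴, extended complex-linearly to Λ²ℂ⁴. Then ⟨Rω,ω⟩_h ≥ 0 for every ω ∈ Λ²₊⊗ℂ whose complex-bilinear square vanishes (⟨ω,ω⟩ = 0, equivalently ω = ω₁ + iω₂ with ω₁,ω₂ ∈ Λ²₊, |ω₁| = |ω₂| and ⟨ω₁,ω₂⟩ = 0) if and only if the quadratic form η ↦ ⟨Rη,η⟩ on Λ²₊ is 2-nonnegative, i.e. ⟨Rη,η⟩ + ⟨Rζ,ζ⟩ ≥ 0 for all η,ζ ∈ Λ²₊ with |η| = |ζ| = 1 and ⟨η,ζ⟩ = 0. -/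
noncomputable section

open scoped ComplexConjugate

theorem aux_herm_re (A : M6) (w : LC6) : (hermC6 (appMC A w) w).re =
    ip6 (appM A fun k => (w k).re) (fun k => (w k).re)
      + ip6 (appM A fun k => (w k).im) (fun k => (w k).im) := by
  simp only [hermC6, appMC, ip6, appM, Complex.re_sum, Complex.mul_re, Complex.im_sum,
    Complex.mul_im, Complex.conj_re, Complex.conj_im, Complex.ofReal_re, Complex.ofReal_im,
    ← Finset.sum_add_distrib]
  refine Finset.sum_congr rfl fun k _ => ?_
  simp only [zero_mul, sub_zero, add_zero]
  ring

theorem aux_herm_im (A : M6) (w : LC6) : (hermC6 (appMC A w) w).im =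
    ip6 (appM A fun k => (w k).im) (fun k => (w k).re)
      - ip6 (appM A fun k => (w k).re) (fun k => (w k).im) := by
  simp only [hermC6, appMC, ip6, appM, Complex.re_sum, Complex.mul_re, Complex.im_sum,
    Complex.mul_im, Complex.conj_re, Complex.conj_im, Complex.ofReal_re, Complex.ofReal_im,
    ← Finset.sum_sub_distrib]
  refine Finset.sum_congr rfl fun k _ => ?_
  simp only [zero_mul, sub_zero, add_zero]
  ring

theorem aux_bil_re (w : LC6) : (bilC6 w w).re =
    ip6 (fun k => (w k).re) (fun k => (w k).re)
      - ip6 (fun k => (w k).im) (fun k => (w k).im) := by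
  simp only [bilC6, ip6, Complex.re_sum, Complex.mul_re, ← Finset.sum_sub_distrib]

theorem aux_bil_im (w : LC6) : (bilC6 w w).im =
    2 * ip6 (fun k => (w k).re) (fun k => (w k).im) := by
  simp only [bilC6, ip6, Complex.im_sum, Complex.mul_im, Finset.mul_sum]
  refine Finset.sum_congr rfl fun k _ => ?_
  ring

theorem aux_comm (a b : L6) : ip6 a b = ip6 b a := by
  simp only [ip6, mul_comm]

theorem aux_smul_s8 (c : ℝ) (a b : L6) : ip6 (c • a) (c • b) = c ^ 2 * ip6 a b := by
  simp only [ip6, Finset.mul_sum, Pi.smul_apply, smul_eq_mul]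
  refine Finset.sum_congr rfl fun k _ => ?_
  ring

theorem aux_app_smul (A : M6) (c : ℝ) (a : L6) : appM A (c • a) = c • appM A a := by
  funext k
  simp only [appM, Finset.mul_sum, Pi.smul_apply, smul_eq_mul]
  refine Finset.sum_congr rfl fun k _ => ?_
  ring

theorem aux_sd_smul_s8 (c : ℝ) (a : L6) (h : SelfDual a) : SelfDual (c • a) := by
  have h' : hodge (c • a) = c • hodge a := by
    funext k
    fin_cases k <;> simp [hodge]
  unfold SelfDual at *
  rw [h', h]

theorem aux_sdC (w : LC6) : SelfDualC w ↔
    SelfDual (fun k => (w k).re) ∧ SelfDual (fun k => (w k).im) := by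
  have e : ∀ k, (hodgeC w k).re = hodge (fun k => (w k).re) k ∧
      (hodgeC w k).im = hodge (fun k => (w k).im) k := by
    intro k
    fin_cases k <;> simp [hodge, hodgeC]
  constructor
  · intro h
    constructor
    · funext k
      rw [← (e k).1, show hodgeC w = w from h]
    · funext k
      rw [← (e k).2, show hodgeC w = w from h]
  · rintro ⟨h1, h2⟩
    funext k
    apply Complex.ext
    · rw [(e k).1, show hodge _ = _ from h1]
    · rw [(e k).2, show hodge _ = _ from h2]

theorem aux_zero (a : L6) (h : ip6 a a = 0) : a = 0 := by
  funext k
  have := (Finset.sum_eq_zero_iff_of_nonneg (fun i _ => mul_self_nonneg (a i))).1 h k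
    (Finset.mem_univ k)
  simpa using this

theorem aux_nonneg (a : L6) : 0 ≤ ip6 a a :=
  Finset.sum_nonneg fun i _ => mul_self_nonneg (a i)

open scoped ComplexOrder in
/-- for a symmetric endomorphism of `Λ²ℝ⁴`, nonnegativity on all
`ω ∈ Λ²₊⊗ℂ` with vanishing bilinear square is equivalent to 2-nonnegativity
of `η ↦ ⟨Rη,η⟩` on `Λ²₊`. -/
theorem nonneg_on_null_selfdual_iff_two_nonneg (A : M6) (hA : IsSymm6 A) :
    (∀ ω : LC6, SelfDualC ω → bilC6 ω ω = 0 →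
      0 ≤ hermC6 (appMC A ω) ω) ↔
    (∀ η ζ : L6, SelfDual η → SelfDual ζ → ip6 η η = 1 → ip6 ζ ζ = 1 →
      ip6 η ζ = 0 → 0 ≤ ip6 (appM A η) η + ip6 (appM A ζ) ζ) := by
  constructor
  · intro H η ζ hη hζ h1 h2 h3
    have := H (fun k => ⟨η k, ζ k⟩) ((aux_sdC _).2 ⟨hη, hζ⟩) (by
      apply Complex.ext
      · rw [aux_bil_re]
        change ip6 η η - ip6 ζ ζ = 0
        rw [h1, h2, sub_self]
      · rw [aux_bil_im]
        change 2 * ip6 η ζ = 0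
        rw [h3, mul_zero])
    have h := (Complex.nonneg_iff.1 this).1
    rw [aux_herm_re] at h
    exact h
  · intro H w hw hb
    obtain ⟨ha, hb'⟩ := (aux_sdC w).1 hw
    have e1 := aux_bil_re w
    have e2 := aux_bil_im w
    rw [Complex.nonneg_iff, aux_herm_re, aux_herm_im]
    rw [hb] at e1 e2
    simp only [Complex.zero_re, Complex.zero_im] at e1 e2
    generalize (fun k => (w k).re) = a at *
    generalize (fun k => (w k).im) = b at *
    refine ⟨?_, ?_⟩
    · rcases (aux_nonneg a).eq_or_lt with h0 | h0
      · have ea := aux_zero a h0.symm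
        have eb := aux_zero b (by linarith)
        subst ea eb
        simp [ip6]
      · have hc : (√(ip6 a a))⁻¹ ^ 2 = (ip6 a a)⁻¹ := by
          rw [inv_pow, Real.sq_sqrt h0.le]
        have := H ((√(ip6 a a))⁻¹ • a) ((√(ip6 a a))⁻¹ • b) (aux_sd_smul_s8 _ _ ha)
          (aux_sd_smul_s8 _ _ hb')
          (by rw [aux_smul_s8, hc, inv_mul_cancel₀ h0.ne'])
          (by rw [aux_smul_s8, hc, show ip6 b b = ip6 a a by linarith, inv_mul_cancel₀ h0.ne'])
          (by rw [aux_smul_s8, show ip6 a b = 0 by linarith, mul_zero])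
        rw [aux_app_smul, aux_app_smul, aux_smul_s8, aux_smul_s8, hc, ← mul_add] at this
        exact nonneg_of_mul_nonneg_right this (inv_pos.2 h0)
    · rw [hA b a, aux_comm, sub_self]
end
end

section
/- Let C be an oriented curvature cone and R ∈ C. Then the operator R̃ ∈ S²_BΛ²ℝ⁴ defined by R̃η = P₊(Rη) for η ∈ Λ²₊ and R̃ζ = (scal(R)/12)·ζ for ζ ∈ Λ²₋ (that is, R̃ = R_Id + R_{W₊}, the sum of the identity component and the self-dual Weyl component of R) also belongs to C. -/
noncomputable section

open scoped ComplexConjugate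

/- ### the quadratic quantity Q(R) = R² + R^# and related notions -/

/-- product of endomorphisms of Λ²ℝ⁴ (matrix product) -/
def mm (A B : M6) : M6 := fun k l => ∑ j, A k j * B j l

/-- the antisymmetric array of coefficients of a 2-form: `ext2 w a b = w_{ab}` -/
def ext2 (w : L6) (a b : Fin 4) : ℝ :=
  ∑ k, w k * ((if (pr k).1 = a ∧ (pr k).2 = b then (1:ℝ) else 0)
    - (if (pr k).1 = b ∧ (pr k).2 = a then (1:ℝ) else 0))

/-- the skew-symmetric matrix `φ(w)` associated to a 2-form `w` under the
identification `x∧y ↦ (u ↦ ⟨x,u⟩y − ⟨y,u⟩x)` of `Λ²ℝ⁴` with `𝔰𝔬(4)` -/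
def toSkew (w : L6) : Fin 4 → Fin 4 → ℝ := fun a b => ext2 w b a

/-- the Lie bracket on Λ²ℝ⁴ obtained by transporting the commutator of
matrices through the identification `Λ²ℝ⁴ ≃ 𝔰𝔬(4)` above -/
def bracket (u v : L6) : L6 :=
  fun k => ∑ c, (toSkew u (pr k).2 c * toSkew v c (pr k).1
    - toSkew v (pr k).2 c * toSkew u c (pr k).1)

/-- the standard (orthonormal) basis of Λ²ℝ⁴ -/
def std6 (k : Fin 6) : L6 := fun l => if l = k then 1 else 0

/-- the quadratic form of `R^#` :
`η ↦ −(1/2) Σᵢ ⟨[η, R([η, Rωᵢ])], ωᵢ⟩` for the orthonormal basis `(ωᵢ)` of Λ²ℝ⁴. -/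
def sharpQ (A : M6) (η : L6) : ℝ :=
  -(1/2 : ℝ) * ∑ i, ip6 (bracket η (appM A (bracket η (appM A (std6 i))))) (std6 i)

/-- `R^#`, the symmetric endomorphism of Λ²ℝ⁴ determined by
`⟨R^#η, η⟩ = sharpQ R η` (obtained by polarization). -/
def sharp (A : M6) : M6 :=
  fun k l => (sharpQ A (std6 k + std6 l) - sharpQ A (std6 k) - sharpQ A (std6 l)) / 2

/-- `Q(R) = R² + R^#` -/
def Qop (A : M6) : M6 := mm A A + sharp A

/-- the identity endomorphism of Λ²ℝ⁴ -/
def idM6 : M6 := fun k l => if k = l then 1 else 0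

/-- the Ricci endomorphism `ρ(R)` of a curvature operator, as a matrix:
`⟨ρ(R)x, y⟩ = Σᵢ ⟨R(x∧eᵢ), y∧eᵢ⟩`. -/
def ricci (A : M6) : Fin 4 → Fin 4 → ℝ :=
  fun a b => ∑ i, ip6 (appM A (wedge (std4 a) (std4 i))) (wedge (std4 b) (std4 i))

/-- An oriented curvature cone: a closed convex cone in `S²_BΛ²ℝ⁴` which is
invariant under the `SO(4)`-action `⟨(g·R)(x∧y), z∧t⟩ = ⟨R(gx∧gy), gz∧gt⟩`
(expressed below by the characterizing property of `B = g·A`) and contains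
the identity in its interior relative to `S²_BΛ²ℝ⁴`. -/
structure OrientedCurvatureCone where
  /-- the underlying set of algebraic curvature operators -/
  carrier : Set M6
  subset_curvOp : ∀ A ∈ carrier, IsCurvOp A
  closed : IsClosed carrier
  convex : Convex ℝ carrier
  cone : ∀ (t : ℝ), 0 ≤ t → ∀ A ∈ carrier, t • A ∈ carrier
  so4_invariant : ∀ (g : Matrix (Fin 4) (Fin 4) ℝ),
    (∀ x y : V4, ip4 (g.mulVec x) (g.mulVec y) = ip4 x y) → g.det = 1 →
    ∀ A ∈ carrier, ∀ B : M6,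
      (∀ x y z t : V4, ip6 (appM B (wedge x y)) (wedge z t)
        = ip6 (appM A (wedge (g.mulVec x) (g.mulVec y)))
            (wedge (g.mulVec z) (g.mulVec t))) →
      B ∈ carrier
  id_mem_interior : ∃ ε : ℝ, 0 < ε ∧
    ∀ A : M6, IsCurvOp A → dist A idM6 < ε → A ∈ carrier


def congrM (L A : M6) : M6 := fun k l => ∑ i, ∑ j, L i k * A i j * L j l

theorem congrM_ip (L A : M6) (u v : L6) :
    ip6 (appM (congrM L A) u) v = ip6 (appM A (appM L u)) (appM L v) := by
  have e1 : ∀ (A : M6) (w : L6), appM A w = (Matrix.of A).mulVec w := fun _ _ => rfl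
  have e2 : ∀ (a b : L6), ip6 a b = a ⬝ᵥ b := fun _ _ => rfl
  have e3 : Matrix.of (congrM L A) = (Matrix.of L).transpose * (Matrix.of A * Matrix.of L) := by
    ext k l
    simp only [Matrix.mul_apply, Matrix.of_apply, Matrix.transpose_apply, congrM, Finset.mul_sum,
      mul_assoc]
  rw [e1, e1, e1, e1, e2, e2, e3, ← Matrix.mulVec_mulVec, ← Matrix.mulVec_mulVec,
    Matrix.mulVec_transpose, Matrix.dotProduct_mulVec, dotProduct_comm]

theorem congrM_mem (C : OrientedCurvatureCone) (g : Matrix (Fin 4) (Fin 4) ℝ) (L : M6)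
    (h1 : ∀ x y : V4, ip4 (g.mulVec x) (g.mulVec y) = ip4 x y) (h2 : g.det = 1)
    (h3 : ∀ x y : V4, wedge (g.mulVec x) (g.mulVec y) = appM L (wedge x y))
    (A : M6) (hAC : A ∈ C.carrier) : congrM L A ∈ C.carrier := by
  refine C.so4_invariant g h1 h2 A hAC _ ?_
  intro x y z t
  rw [h3, h3, congrM_ip]

def gI : Matrix (Fin 4) (Fin 4) ℝ := !![0,-1,0,0;1,0,0,0;0,0,0,1;0,0,-1,0]
def gJ : Matrix (Fin 4) (Fin 4) ℝ := !![0,0,-1,0;0,0,0,-1;1,0,0,0;0,1,0,0]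
def gQ : Matrix (Fin 4) (Fin 4) ℝ :=
  !![1/2,-1/2,-1/2,-1/2;1/2,1/2,1/2,-1/2;1/2,-1/2,1/2,1/2;1/2,1/2,-1/2,1/2]

def lI : M6 := ![![1, 0, 0, 0, 0, 0], ![0, 0, 0, 0, -1, 0], ![0, 0, 0, 1, 0, 0],
  ![0, 0, 1, 0, 0, 0], ![0, -1, 0, 0, 0, 0], ![0, 0, 0, 0, 0, 1]]
def lJ : M6 := ![![0, 0, 0, 0, 0, 1], ![0, 1, 0, 0, 0, 0], ![0, 0, 0, 1, 0, 0],
  ![0, 0, 1, 0, 0, 0], ![0, 0, 0, 0, 1, 0], ![1, 0, 0, 0, 0, 0]]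
def lQ : M6 := ![![1/2, 1/2, 0, 0, 1/2, 1/2], ![0, 1/2, 1/2, -1/2, -1/2, 0],
  ![1/2, 0, 1/2, 1/2, 0, -1/2], ![-1/2, 0, 1/2, 1/2, 0, 1/2],
  ![0, -1/2, 1/2, -1/2, 1/2, 0], ![1/2, -1/2, 0, 0, -1/2, 1/2]]

theorem memI (C : OrientedCurvatureCone) (A : M6) (h : A ∈ C.carrier) :
    congrM lI A ∈ C.carrier := by
  refine congrM_mem C gI lI ?_ ?_ ?_ A h
  · intro x y
    simp [ip4, gI, Matrix.mulVec, dotProduct, Fin.sum_univ_succ]; ring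
  · simp [gI, Matrix.det_succ_row_zero, Fin.sum_univ_succ, Fin.succAbove]
  · intro x y
    ext k
    fin_cases k <;>
      simp [wedge, pr, appM, gI, lI, Matrix.mulVec, dotProduct, Fin.sum_univ_succ] <;> ring

theorem memJ (C : OrientedCurvatureCone) (A : M6) (h : A ∈ C.carrier) :
    congrM lJ A ∈ C.carrier := by
  refine congrM_mem C gJ lJ ?_ ?_ ?_ A h
  · intro x y
    simp [ip4, gJ, Matrix.mulVec, dotProduct, Fin.sum_univ_succ]; ring
  · simp [gJ, Matrix.det_succ_row_zero, Fin.sum_univ_succ, Fin.succAbove]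
  · intro x y
    ext k
    fin_cases k <;>
      simp [wedge, pr, appM, gJ, lJ, Matrix.mulVec, dotProduct, Fin.sum_univ_succ] <;> ring

theorem memQ (C : OrientedCurvatureCone) (A : M6) (h : A ∈ C.carrier) :
    congrM lQ A ∈ C.carrier := by
  refine congrM_mem C gQ lQ ?_ ?_ ?_ A h
  · intro x y
    simp [ip4, gQ, Matrix.mulVec, dotProduct, Fin.sum_univ_succ]; ring
  · simp [gQ, Matrix.det_succ_row_zero, Fin.sum_univ_succ, Fin.succAbove]; norm_num
  · intro x y
    ext k
    fin_cases k <;>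
      simp [wedge, pr, appM, gQ, lQ, Matrix.mulVec, dotProduct, Fin.sum_univ_succ] <;> ring

def ai : Fin 6 → Fin 3 := ![0,1,2,2,1,0]
def sg : Fin 6 → ℝ := ![1,1,1,1,-1,1]
def tg : Fin 6 → ℝ := ![1,1,1,-1,1,-1]

/-- block operator -/
def blk (p : Fin 3 → Fin 3 → ℝ) (d : Fin 3 → ℝ) : M6 := fun k l =>
  (sg k * sg l * p (ai k) (ai l) + if ai k = ai l then tg k * tg l * d (ai k) else 0) / 2

def pOf (A : M6) : Fin 3 → Fin 3 → ℝ := fun a b =>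
  (∑ k, ∑ l, if ai k = a ∧ ai l = b then sg k * sg l * A k l else 0) / 2
def dOf (A : M6) : Fin 3 → ℝ := fun a =>
  (∑ k, ∑ l, if ai k = a ∧ ai l = a then tg k * tg l * A k l else 0) / 2

def avg (A A' : M6) : M6 := (1/2 : ℝ) • A + (1/2 : ℝ) • A'

theorem avg_mem (C : OrientedCurvatureCone) (A A' : M6) (h : A ∈ C.carrier)
    (h' : A' ∈ C.carrier) : avg A A' ∈ C.carrier :=
  C.convex h h' (by norm_num) (by norm_num) (by norm_num)

theorem congr_lI (A : M6) (k l : Fin 6) : congrM lI A k l =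
    (![1,-1,1,1,-1,1] : L6) k * (![1,-1,1,1,-1,1] : L6) l
      * A ((![0,4,3,2,1,5] : Fin 6 → Fin 6) k) ((![0,4,3,2,1,5] : Fin 6 → Fin 6) l) := by
  fin_cases k <;> fin_cases l <;> simp [congrM, lI, Fin.sum_univ_succ]

theorem congr_lJ (A : M6) (k l : Fin 6) : congrM lJ A k l =
      A ((![5,1,3,2,4,0] : Fin 6 → Fin 6) k) ((![5,1,3,2,4,0] : Fin 6 → Fin 6) l) := by
  fin_cases k <;> fin_cases l <;> simp [congrM, lJ, Fin.sum_univ_succ]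

theorem avg_eq (A : M6) :
    avg (avg A (congrM lI A)) (congrM lJ (avg A (congrM lI A))) = blk (pOf A) (dOf A) := by
  ext k l
  simp only [avg, Pi.add_apply, Pi.smul_apply, smul_eq_mul, congr_lJ, congr_lI]
  fin_cases k <;> fin_cases l <;>
    simp [blk, pOf, dOf, ai, sg, tg, Fin.sum_univ_six] <;> ring

set_option maxHeartbeats 4000000 in
theorem congr_lQ (p : Fin 3 → Fin 3 → ℝ) (d : Fin 3 → ℝ) :
    congrM lQ (blk p d) = blk p ![d 2, d 0, d 1] := by
  ext k l
  fin_cases k <;> fin_cases l <;>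
    simp [congrM, lQ, blk, ai, sg, tg, Fin.sum_univ_six] <;> ring

theorem blk_mem (C : OrientedCurvatureCone) (p : Fin 3 → Fin 3 → ℝ) (d : Fin 3 → ℝ)
    (h : blk p d ∈ C.carrier) : blk p (fun _ => (d 0 + d 1 + d 2) / 3) ∈ C.carrier := by
  have h1 := memQ C _ h
  have h2 := memQ C _ h1
  rw [congr_lQ] at h1 h2
  rw [congr_lQ] at h2
  have h3 := avg_mem C _ _ h1 h2
  have h4 := C.convex h h3 (by norm_num : (0:ℝ) ≤ 1/3) (by norm_num : (0:ℝ) ≤ 2/3) (by norm_num)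
  convert h4 using 1
  ext k l
  simp only [avg, Pi.add_apply, Pi.smul_apply, smul_eq_mul, blk]
  generalize ai k = a
  generalize ai l = b
  fin_cases a <;> fin_cases b <;> simp <;> ring

theorem id_add_weylPlus_component_mem_cone (C : OrientedCurvatureCone)
    (A : M6) (hA : A ∈ C.carrier) (B : M6)
    (hBplus : ∀ η : L6, SelfDual η → appM B η = pplus (appM A η))
    (hBminus : ∀ ζ : L6, AntiSelfDual ζ → appM B ζ = (scal A / 12) • ζ) :
    B ∈ C.carrier := by
  obtain ⟨hs, hb⟩ := C.subset_curvOp A hA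
  have h1 := avg_mem C _ _ hA (memI C _ hA)
  have h2 := avg_mem C _ _ h1 (memJ C _ h1)
  rw [avg_eq] at h2
  have h3 := blk_mem C _ _ h2
  have hsym : ∀ k l, A k l = A l k := by
    intro k l
    have := hs (std6 l) (std6 k)
    simpa [ip6, appM, std6] using this
  have hbi : A 0 5 - A 1 4 + A 2 3 = 0 := by
    have := hb (std4 0) (std4 1) (std4 2) (std4 3)
    simp [ip6, appM, std4, wedge, pr, Fin.sum_univ_six] at this
    linarith [hsym 0 5, hsym 1 4, hsym 2 3]
  have hd : (dOf A 0 + dOf A 1 + dOf A 2) / 3 = scal A / 12 := by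
    simp [dOf, scal, ai, tg, Fin.sum_univ_six]
    linarith [hsym 0 5, hsym 1 4, hsym 2 3]
  rw [hd] at h3
  convert h3 using 1
  have P := fun (η : L6) (h : SelfDual η) (k : Fin 6) => congrFun (hBplus η h) k
  have N := fun (η : L6) (h : AntiSelfDual η) (k : Fin 6) => congrFun (hBminus η h) k
  have P0 := P ![1,0,0,0,0,1] (by simp [SelfDual, hodge])
  have P1 := P ![0,1,0,0,-1,0] (by simp [SelfDual, hodge])
  have P2 := P ![0,0,1,1,0,0] (by simp [SelfDual, hodge])
  have N0 := N ![1,0,0,0,0,-1] (by simp [AntiSelfDual, hodge])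
  have N1 := N ![0,1,0,0,1,0] (by simp [AntiSelfDual, hodge])
  have N2 := N ![0,0,1,-1,0,0] (by simp [AntiSelfDual, hodge])
  generalize scal A / 12 = c at *
  clear P N hBplus hBminus h1 h2 h3 hs hb hd
  ext k l
  replace P0 := P0 k
  replace P1 := P1 k
  replace P2 := P2 k
  replace N0 := N0 k
  replace N1 := N1 k
  replace N2 := N2 k
  simp only [appM, pplus, hodge, Pi.smul_apply, Pi.add_apply, smul_eq_mul, Fin.sum_univ_six] at P0 P1 P2 N0 N1 N2
  fin_cases k <;> simp at P0 P1 P2 N0 N1 N2 <;> fin_cases l <;>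
    simp [blk, pOf, ai, sg, tg, Fin.sum_univ_six] <;> linarith
end
end

section
/- For every unit quaternion q, the map x ↦ x·q⁻¹ of ℝ⁴ ≅ ℍ is in SO(4), and the induced linear map on Λ²ℝ⁴ (sending x∧y to (xq⁻¹)∧(yq⁻¹)) fixes every self-dual 2-form, i.e. restricts to the identity on Λ²₊. -/
noncomputable section

open scoped ComplexConjugate

/-- The induced linear map `Λ²f` on `Λ²ℝ⁴` of a (linear) map `f : ℝ⁴ → ℝ⁴`,
sending `x∧y` to `f x ∧ f y`, given by its matrix in the standard basis. -/
def L2mapM (f : V4 → V4) : M6 :=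
  fun k l => wedge (f (std4 (pr l).1)) (f (std4 (pr l).2)) k


/-- the identification ℝ⁴ ≅ ℍ, (x,y,z,t) ↦ x + yi + zj + tk -/
def toQuat (x : V4) : Quaternion ℝ := ⟨x 0, x 1, x 2, x 3⟩

/-- the identification ℍ ≅ ℝ⁴ -/
def ofQuat (q : Quaternion ℝ) : V4 := ![q.re, q.imI, q.imJ, q.imK]


theorem aux_form (p : Quaternion ℝ) (x : V4) :
    ofQuat (toQuat x * p) =
      ![x 0 * p.re - x 1 * p.imI - x 2 * p.imJ - x 3 * p.imK,
        x 0 * p.imI + x 1 * p.re + x 2 * p.imK - x 3 * p.imJ,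
        x 0 * p.imJ - x 1 * p.imK + x 2 * p.re + x 3 * p.imI,
        x 0 * p.imK + x 1 * p.imJ - x 2 * p.imI + x 3 * p.re] := by
  ext i
  fin_cases i
  · exact (Quaternion.re_mul (toQuat x) p)
  · exact (Quaternion.imI_mul (toQuat x) p)
  · exact (Quaternion.imJ_mul (toQuat x) p)
  · exact (Quaternion.imK_mul (toQuat x) p)

/-- for a unit quaternion `q`, the map `x ↦ x·q⁻¹` of
`ℝ⁴ ≅ ℍ` is in `SO(4)` (linear, orthogonal, determinant one) and the induced
map on `Λ²ℝ⁴` (sending `x∧y` to `(xq⁻¹)∧(yq⁻¹)`) fixes every self-dual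
2-form. -/
theorem right_mul_unit_quaternion_fixes_selfdual (q : Quaternion ℝ)
    (hq : ‖q‖ = 1) :
    IsLinearMap ℝ (fun x : V4 => ofQuat (toQuat x * q⁻¹)) ∧
    (∀ x y : V4,
      ip4 (ofQuat (toQuat x * q⁻¹)) (ofQuat (toQuat y * q⁻¹)) = ip4 x y) ∧
    (Matrix.of fun i j : Fin 4 => ofQuat (toQuat (std4 j) * q⁻¹) i).det = 1 ∧
    (∀ x y : V4,
      appM (L2mapM (fun x => ofQuat (toQuat x * q⁻¹))) (wedge x y)
        = wedge (ofQuat (toQuat x * q⁻¹)) (ofQuat (toQuat y * q⁻¹))) ∧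
    (∀ w : L6, SelfDual w →
      appM (L2mapM (fun x => ofQuat (toQuat x * q⁻¹))) w = w) := by
  have hp : ‖q⁻¹‖ = 1 := by rw [norm_inv, hq, inv_one]
  generalize q⁻¹ = p at hp
  have h : p.re ^ 2 + p.imI ^ 2 + p.imJ ^ 2 + p.imK ^ 2 = 1 := by
    have h1 := Quaternion.normSq_eq_norm_mul_self p
    rw [hp, Quaternion.normSq_def'] at h1
    linarith
  simp only [aux_form]
  generalize p.re = a at h
  generalize p.imI = b at h
  generalize p.imJ = c at h
  generalize p.imK = d at h
  refine ⟨⟨?_, ?_⟩, ?_, ?_, ?_, ?_⟩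
  · intro x y
    ext i
    fin_cases i <;> simp <;> ring
  · intro r x
    ext i
    fin_cases i <;> simp <;> ring
  · intro x y
    simp [ip4, Fin.sum_univ_four]
    linear_combination (x 0 * y 0 + x 1 * y 1 + x 2 * y 2 + x 3 * y 3) * h
  · simp [Matrix.det_succ_row_zero, Fin.sum_univ_succ, std4, Fin.succAbove]
    linear_combination (a ^ 2 + b ^ 2 + c ^ 2 + d ^ 2 + 1) * h
  · intro x y
    ext k
    fin_cases k <;> simp [appM, L2mapM, wedge, pr, std4, Fin.sum_univ_six] <;> ring
  · intro w hw
    have h0 : w 5 = w 0 := congrFun hw 0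
    have h1 : -(w 4) = w 1 := congrFun hw 1
    have h2 : w 3 = w 2 := congrFun hw 2
    have h4 : w 4 = - w 1 := by linarith
    ext k
    fin_cases k <;> simp [appM, L2mapM, wedge, pr, std4, Fin.sum_univ_six, h0, h4, h2]
    · linear_combination w 0 * h
    · linear_combination w 1 * h
    · linear_combination w 2 * h
    · linear_combination w 2 * h
    · linear_combination (-w 1) * h
    · linear_combination w 0 * h
end
end

section
/- Let P : ℝ⁴ → ℝ⁴ be the orthogonal projection onto a 3-dimensional linear subspace and let R be the symmetric endomorphism of Λ²ℝ⁴ determined by ⟨R(x∧y), z∧t⟩ = ⟨Px,z⟩⟨Py,t⟩ − ⟨Px,t⟩⟨Py,z⟩ (the curvature operator of the product ℝ×S³). Then R is an algebraic curvature operator on ℝ⁴ which is both PIC₊ and PIC₋. -/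
noncomputable section

open scoped ComplexConjugate

theorem aux_rank_one (Q : Fin 4 → Fin 4 → ℝ) (hs : ∀ i j, Q i j = Q j i)
    (hi : ∀ i j, (∑ l, Q i l * Q l j) = Q i j) (ht : ∑ i, Q i i = 1) :
    ∃ n : Fin 4 → ℝ, (∀ i j, Q i j = n i * n j) ∧ ∑ i, n i * n i = 1 := by
  have h1 : ∑ i, ∑ j, Q i j * Q i j = 1 := by
    rw [← ht]
    refine Finset.sum_congr rfl fun i _ => ?_
    rw [← hi i i]
    exact Finset.sum_congr rfl fun j _ => by rw [hs j i]
  have h2 : ∑ i, ∑ k, ∑ j, ∑ l, (Q i j * Q i l) * (Q k j * Q k l) = 1 := by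
    have : ∀ i k, ∑ j, ∑ l, (Q i j * Q i l) * (Q k j * Q k l) = Q i k * Q i k := by
      intro i k
      conv_rhs => rw [← hi i k]
      rw [Finset.sum_mul_sum]
      refine Finset.sum_congr rfl fun j _ => Finset.sum_congr rfl fun l _ => ?_
      rw [hs j k, hs l k]; ring
    simp_rw [this]; exact h1
  have h3 : ∑ i, ∑ k, ∑ j, ∑ l, (Q i j * Q i j) * (Q k l * Q k l) = 1 := by
    simp_rw [← Finset.mul_sum, ← Finset.sum_mul, ← Finset.mul_sum, ← Finset.sum_mul, h1]
    norm_num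
  have h3' : ∑ i, ∑ k, ∑ j, ∑ l, (Q i l * Q i l) * (Q k j * Q k j) = 1 := by
    rw [← h3]
    refine Finset.sum_congr rfl fun i _ => Finset.sum_congr rfl fun k _ => ?_
    exact Finset.sum_comm
  have h4 : ∑ i, ∑ k, ∑ j, ∑ l, (Q i j * Q k l - Q i l * Q k j) ^ 2 = 0 := by
    have : ∀ i k j l, (Q i j * Q k l - Q i l * Q k j) ^ 2 =
      (Q i j * Q i j) * (Q k l * Q k l) + (Q i l * Q i l) * (Q k j * Q k j)
        - 2 * ((Q i j * Q i l) * (Q k j * Q k l)) := by intros; ring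
    simp_rw [this, Finset.sum_sub_distrib, Finset.sum_add_distrib, ← Finset.mul_sum]
    simp_rw [← Finset.mul_sum] at h2 h3 h3'
    rw [h2, h3, h3']; norm_num
  have hm : ∀ i k j l, Q i j * Q k l = Q i l * Q k j := by
    intro i k j l
    rw [Finset.sum_eq_zero_iff_of_nonneg (fun _ _ => by positivity)] at h4
    have h5 := h4 i (Finset.mem_univ _)
    rw [Finset.sum_eq_zero_iff_of_nonneg (fun _ _ => by positivity)] at h5
    have h6 := h5 k (Finset.mem_univ _)
    rw [Finset.sum_eq_zero_iff_of_nonneg (fun _ _ => by positivity)] at h6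
    have h7 := h6 j (Finset.mem_univ _)
    rw [Finset.sum_eq_zero_iff_of_nonneg (fun _ _ => by positivity)] at h7
    have h8 := h7 l (Finset.mem_univ _)
    exact sub_eq_zero.mp (pow_eq_zero_iff (two_ne_zero) |>.mp h8)
  obtain ⟨r, hr⟩ : ∃ r, 0 < Q r r := by
    by_contra! h
    have := Finset.sum_nonpos (s := Finset.univ) (fun i _ => h i)
    linarith
  have hq : ∀ i j, Q i j = (Q r i / √(Q r r)) * (Q r j / √(Q r r)) := by
    intro i j
    rw [div_mul_div_comm, Real.mul_self_sqrt hr.le, eq_div_iff hr.ne']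
    have := hm i r j r
    rw [hs i r] at this
    linarith
  refine ⟨fun i => Q r i / √(Q r r), hq, ?_⟩
  rw [← ht]
  exact Finset.sum_congr rfl fun i _ => (hq i i).symm

theorem aux_entry (A : M6) (k l : Fin 6) :
    A k l = ip6 (appM A (wedge (std4 (pr l).1) (std4 (pr l).2)))
      (wedge (std4 (pr k).1) (std4 (pr k).2)) := by
  have h : ∀ k : Fin 6, wedge (std4 (pr k).1) (std4 (pr k).2) = Pi.single k 1 := by
    intro k
    funext m
    fin_cases k <;> fin_cases m <;> simp [wedge, std4, pr, Pi.single_apply]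
  rw [h, h]
  simp [ip6, appM, Pi.single_apply]

theorem aux_proj (P : Fin 4 → Fin 4 → ℝ) (i j : Fin 4) :
    ip4 (fun a => ∑ b, P a b * std4 i b) (std4 j) = P j i := by
  simp [ip4, std4]

/-- the curvature operator of `ℝ×S³`, i.e. the symmetric
endomorphism of `Λ²ℝ⁴` determined by
`⟨R(x∧y), z∧t⟩ = ⟨Px,z⟩⟨Py,t⟩ − ⟨Px,t⟩⟨Py,z⟩` for the orthogonal projection
`P` onto a 3-dimensional subspace, is an algebraic curvature operator which is
both PIC₊ and PIC₋. -/
theorem curvature_of_product_with_sphere_is_pic (P : Fin 4 → Fin 4 → ℝ)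
    (hPsymm : ∀ i j, P i j = P j i)
    (hPidem : ∀ i j, (∑ l, P i l * P l j) = P i j)
    (hPtrace : ∑ i, P i i = 3)
    (A : M6) (hAsymm : IsSymm6 A)
    (hchar : ∀ x y z t : V4, ip6 (appM A (wedge x y)) (wedge z t)
      = ip4 (fun i => ∑ j, P i j * x j) z * ip4 (fun i => ∑ j, P i j * y j) t
        - ip4 (fun i => ∑ j, P i j * x j) t * ip4 (fun i => ∑ j, P i j * y j) z) :
    IsCurvOp A ∧ PICp A ∧ PICm A := by
  obtain ⟨n, hn, hn1⟩ := aux_rank_one (fun i j => (if i = j then 1 else 0) - P i j)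
    (fun i j => by simp only [hPsymm i j, eq_comm])
    (fun i j => by
      have := hPidem i j
      simp only [sub_mul, mul_sub, Finset.sum_sub_distrib, this]
      simp)
    (by simp only [Finset.sum_sub_distrib, hPtrace]; norm_num)
  have hP : ∀ i j, P i j = (if i = j then 1 else 0) - n i * n j := by
    intro i j; have := hn i j; linarith
  have hA : ∀ k l, A k l = P (pr k).1 (pr l).1 * P (pr k).2 (pr l).2
      - P (pr k).2 (pr l).1 * P (pr k).1 (pr l).2 := by
    intro k l
    rw [aux_entry A k l, hchar]
    simp only [aux_proj]
  rw [Fin.sum_univ_four] at hn1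
  have hip : ∀ x z, ip4 (fun i => ∑ j, P i j * x j) z = ip4 (fun i => ∑ j, P i j * z j) x := by
    intro x z
    simp only [ip4, Finset.sum_mul]
    rw [Finset.sum_comm]
    refine Finset.sum_congr rfl fun i _ => Finset.sum_congr rfl fun j _ => ?_
    rw [hPsymm i j]; ring
  have key : ∀ s : ℝ, s ^ 2 = 1 → ∀ η : L6, η 5 = s * η 0 → η 4 = - (s * η 1) → η 3 = s * η 2 →
      ip6 (appM A η) η = ip6 η η / 2 := by
    intro s hs η h5 h4 h3
    simp only [ip6, appM, Fin.sum_univ_six, h5, h4, h3, hA, hP, pr]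
    simp
    rcases (by simpa using hs : s = 1 ∨ s = -1) with rfl | rfl
    all_goals linear_combination (-(η 0 ^ 2 + η 1 ^ 2 + η 2 ^ 2)) * hn1
  refine ⟨⟨hAsymm, ?_⟩, ?_, ?_⟩
  · intro x y z t
    rw [hchar, hchar, hchar, hip z y, hip x z, hip y x]
    ring
  · intro η ζ h h' h1 h2 _
    rw [key 1 (by norm_num) η, key 1 (by norm_num) ζ, h1, h2]
    · norm_num
    · simpa [hodge] using (congrFun h' 0)
    · simpa [hodge] using (congrFun h' 4).symm
    · simpa [hodge] using (congrFun h' 2)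
    · simpa [hodge] using (congrFun h 0)
    · simpa [hodge] using (congrFun h 4).symm
    · simpa [hodge] using (congrFun h 2)
  · intro η ζ h h' h1 h2 _
    rw [key (-1) (by norm_num) η, key (-1) (by norm_num) ζ, h1, h2]
    · norm_num
    · simpa [hodge] using (congrFun h' 0)
    · have := congrFun h' 4
      simp [hodge] at this ⊢; linarith
    · simpa [hodge] using (congrFun h' 2)
    · simpa [hodge] using (congrFun h 0)
    · have := congrFun h 4
      simp [hodge] at this ⊢; linarith
    · simpa [hodge] using (congrFun h 2)
end
end

section
/- Let R be an algebraic curvature operator on ℝ⁴ whose self-dual Weyl part vanishes (W₊ = 0, i.e. P₊(Rη) = (scal(R)/12)·η for all η ∈ Λ²₊) and whose scalar curvature is positive, scal(R) > 0. Then R is PIC₊. -/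
noncomputable section

open scoped ComplexConjugate

theorem ip6_pplus_of_selfDual (v w : L6) (hw : SelfDual w) : ip6 v w = ip6 (pplus v) w := by
  have h0 := congrFun hw 0
  have h1 := congrFun hw 1
  have h2 := congrFun hw 2
  simp [hodge] at h0 h1 h2
  have hp : ∀ k, pplus v k = 1 / 2 * (v k + hodge v k) := fun _ => rfl
  simp [ip6, hp, hodge, Fin.sum_univ_six]
  rw [← h0, ← h1, ← h2]
  ring

theorem ip6_smul_left_s17 (c : ℝ) (v w : L6) : ip6 (c • v) w = c * ip6 v w := by
  simp [ip6, Finset.mul_sum, mul_assoc]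

/-- an algebraic curvature operator with vanishing self-dual
Weyl part and positive scalar curvature is PIC₊. -/
theorem picPlus_of_weylPlus_eq_zero_of_scal_pos (A : M6) (hA : IsCurvOp A)
    (hW : ∀ η : L6, SelfDual η → pplus (appM A η) = (scal A / 12) • η)
    (hscal : 0 < scal A) :
    PICp A := by
  intro η ζ hη hζ h1 h2 _
  rw [ip6_pplus_of_selfDual _ η hη, ip6_pplus_of_selfDual _ ζ hζ, hW η hη, hW ζ hζ,
    ip6_smul_left_s17, ip6_smul_left_s17, h1, h2]
  linarith
end
end

section
/- Let R be an algebraic curvature operator on ℝ⁴ with scal(R) ≥ 0 whose self-dual Weyl part W₊ has eigenvalues scal(R)/6, −scal(R)/12, −scal(R)/12 (counted with multiplicity, as a symmetric endomorphism of the 3-dimensional space Λ²₊). Then R is NNIC₊ but R is not PIC₊. -/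
noncomputable section

open scoped ComplexConjugate

lemma sd_coords {w : L6} (h : SelfDual w) : w 5 = w 0 ∧ w 4 = -w 1 ∧ w 3 = w 2 := by
  have a := congrFun h 0
  have b := congrFun h 1
  have c := congrFun h 2
  simp [hodge] at a b c
  exact ⟨a, by linarith, c⟩

lemma ip6_pplus_s18 {w : L6} (h : SelfDual w) (v : L6) : ip6 w (pplus v) = ip6 w v := by
  obtain ⟨a, b, c⟩ := sd_coords h
  simp only [ip6, Fin.sum_univ_six, a, b, c]
  change w 0 * (1 / 2 * (v 0 + v 5)) + w 1 * (1 / 2 * (v 1 + -v 4)) + w 2 * (1 / 2 * (v 2 + v 3))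
    + w 2 * (1 / 2 * (v 3 + v 2)) + -w 1 * (1 / 2 * (v 4 + -v 1)) + w 0 * (1 / 2 * (v 5 + v 0)) = _
  ring

lemma sd_expand (η : Fin 3 → L6) (hsd : ∀ i, SelfDual (η i))
    (hon : ∀ i j, ip6 (η i) (η j) = if i = j then 1 else 0) {w : L6} (h : SelfDual w) :
    w = ip6 w (η 0) • η 0 + ip6 w (η 1) • η 1 + ip6 w (η 2) • η 2 := by
  let M : Matrix (Fin 3) (Fin 3) ℝ := fun i p => η i (Fin.castLE (by norm_num) p)
  let N : Matrix (Fin 3) (Fin 3) ℝ := fun p i => 2 * η i (Fin.castLE (by norm_num) p)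
  have hMN : M * N = 1 := by
    ext i j
    have := hon i j
    obtain ⟨a, b, c⟩ := sd_coords (hsd i)
    obtain ⟨a', b', c'⟩ := sd_coords (hsd j)
    simp only [ip6, Fin.sum_univ_six, a, b, c, a', b', c'] at this
    rw [Matrix.mul_apply, Matrix.one_apply, ← this, Fin.sum_univ_three]
    change η i 0 * (2 * η j 0) + η i 1 * (2 * η j 1) + η i 2 * (2 * η j 2) = _
    ring
  have hNM : N * M = 1 := mul_eq_one_comm.mp hMN
  have key : ∀ p q : Fin 3, 2 * η 0 (Fin.castLE (by norm_num) p) * η 0 (Fin.castLE (by norm_num) q)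
      + 2 * η 1 (Fin.castLE (by norm_num) p) * η 1 (Fin.castLE (by norm_num) q)
      + 2 * η 2 (Fin.castLE (by norm_num) p) * η 2 (Fin.castLE (by norm_num) q)
      = if p = q then (1 : ℝ) else 0 := by
    intro p q
    have := congrFun (congrFun hNM p) q
    rw [Matrix.mul_apply, Matrix.one_apply, Fin.sum_univ_three] at this
    exact this
  have k00 : 2 * η 0 0 * η 0 0 + 2 * η 1 0 * η 1 0 + 2 * η 2 0 * η 2 0 = 1 := key 0 0
  have k11 : 2 * η 0 1 * η 0 1 + 2 * η 1 1 * η 1 1 + 2 * η 2 1 * η 2 1 = 1 := key 1 1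
  have k22 : 2 * η 0 2 * η 0 2 + 2 * η 1 2 * η 1 2 + 2 * η 2 2 * η 2 2 = 1 := key 2 2
  have k01 : 2 * η 0 0 * η 0 1 + 2 * η 1 0 * η 1 1 + 2 * η 2 0 * η 2 1 = 0 := key 0 1
  have k02 : 2 * η 0 0 * η 0 2 + 2 * η 1 0 * η 1 2 + 2 * η 2 0 * η 2 2 = 0 := key 0 2
  have k12 : 2 * η 0 1 * η 0 2 + 2 * η 1 1 * η 1 2 + 2 * η 2 1 * η 2 2 = 0 := key 1 2
  obtain ⟨a, b, c⟩ := sd_coords h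
  obtain ⟨a0, b0, c0⟩ := sd_coords (hsd 0)
  obtain ⟨a1, b1, c1⟩ := sd_coords (hsd 1)
  obtain ⟨a2, b2, c2⟩ := sd_coords (hsd 2)
  ext k
  simp only [ip6, Fin.sum_univ_six, Pi.add_apply, Pi.smul_apply, smul_eq_mul, a, b, c, a0, b0, c0,
    a1, b1, c1, a2, b2, c2]
  fin_cases k <;> simp only [Fin.zero_eta, Fin.mk_one, Fin.reduceFinMk, a, b, c, a0, b0, c0,
    a1, b1, c1, a2, b2, c2]
  · linear_combination -(w 0) * k00 - w 1 * k01 - w 2 * k02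
  · linear_combination -(w 0) * k01 - w 1 * k11 - w 2 * k12
  · linear_combination -(w 0) * k02 - w 1 * k12 - w 2 * k22
  · linear_combination -(w 0) * k02 - w 1 * k12 - w 2 * k22
  · linear_combination (w 0) * k01 + w 1 * k11 + w 2 * k12
  · linear_combination -(w 0) * k00 - w 1 * k01 - w 2 * k02

lemma ip6_app_of_eig (A : M6) (hs : IsSymm6 A) {w v : L6} (hw : SelfDual w) {m : ℝ}
    (h : Wplus A v = m • v) : ip6 (appM A w) v = (m + scal A / 12) * ip6 w v := by
  have hp : pplus (appM A v) = (m + scal A / 12) • v := by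
    rw [add_smul, ← h, Wplus, sub_add_cancel]
  rw [hs, ← ip6_pplus_s18 hw, hp]
  simp only [ip6, Pi.smul_apply, smul_eq_mul, Finset.mul_sum]
  exact Finset.sum_congr rfl fun _ _ => by ring

lemma ip6_lin (u x y z : L6) (a b c : ℝ) :
    ip6 u (a • x + b • y + c • z) = a * ip6 u x + b * ip6 u y + c * ip6 u z := by
  simp [ip6, Fin.sum_univ_six]
  ring

/-- an algebraic curvature operator with nonnegative scalar
curvature whose self-dual Weyl part has eigenvalues
`scal/6, −scal/12, −scal/12` (on an orthonormal basis of `Λ²₊`) is NNIC₊ but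
not PIC₊. -/
theorem nnicPlus_not_picPlus_of_kaehler_weyl_spectrum (A : M6) (hA : IsCurvOp A)
    (hscal : 0 ≤ scal A) (η : Fin 3 → L6)
    (hsd : ∀ i, SelfDual (η i))
    (hon : ∀ i j, ip6 (η i) (η j) = if i = j then 1 else 0)
    (h0 : Wplus A (η 0) = (scal A / 6) • η 0)
    (h1 : Wplus A (η 1) = (-(scal A / 12)) • η 1)
    (h2 : Wplus A (η 2) = (-(scal A / 12)) • η 2) :
    NNICp A ∧ ¬ PICp A := by
  have q0 := fun {w : L6} (hw : SelfDual w) => ip6_app_of_eig A hA.1 hw h0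
  have q1 := fun {w : L6} (hw : SelfDual w) => ip6_app_of_eig A hA.1 hw h1
  have q2 := fun {w : L6} (hw : SelfDual w) => ip6_app_of_eig A hA.1 hw h2
  have Q : ∀ w : L6, SelfDual w → 0 ≤ ip6 (appM A w) w := by
    intro w hw
    have e : ip6 (appM A w) w = scal A / 4 * ip6 w (η 0) ^ 2 := by
      have e1 := congrArg (ip6 (appM A w)) (sd_expand η hsd hon hw)
      rw [ip6_lin, q0 hw, q1 hw, q2 hw] at e1
      rw [e1]
      ring
    rw [e]
    positivity
  refine ⟨fun a b ha hb _ _ _ => add_nonneg (Q a ha) (Q b hb), fun hP => ?_⟩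
  have := hP (η 1) (η 2) (hsd 1) (hsd 2) (by simp [hon]) (by simp [hon]) (by simp [hon])
  rw [q1 (hsd 1), q2 (hsd 2)] at this
  simp at this
end
end
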